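/- arXiv:2003.04815 — 2 statements merged into one kernel-verified Lean document; each statement's English description precedes it below -/
import Mathlib

section
/- Let u be a function on 𝕋^d and define the symbols a₂, b₂, a₁ from F and u as in the context. Then a₂(x,ξ) = conj(a₂(x,ξ)), a₁(x,ξ) = conj(a₁(x,ξ)), a₁(x,−ξ) = −a₁(x,ξ), a₂(x,−ξ) = a₂(x,ξ); moreover, for s₀ > d/2 and every p ∈ ℕ with p + s₀ ≤ s: |a₂|_{𝒩²_p} + |b₂|_{𝒩²_p} + |a₁|_{𝒩¹_p} ≤ C ‖u‖_{H^{p+s₀+1}}, where C > 0 depends on ‖u‖_{H^{p+s₀+1}} and is bounded as u → 0. -/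
open MeasureTheory Complex Real Filter

noncomputable section

namespace QLNLS

/-- Points of `ℝ^d` (resp. the torus `𝕋^d = (ℝ/2πℤ)^d`, via `2π`-periodic functions). -/
abbrev Vec (d : ℕ) := Fin d → ℝ
/-- Frequency lattice `ℤ^d`. -/
abbrev Zd (d : ℕ) := Fin d → ℤ
/-- Functions on the torus. -/
abbrev Fn (d : ℕ) := Vec d → ℂ
/-- Sequences of Fourier coefficients. -/
abbrev Seq (d : ℕ) := Zd d → ℂ
/-- Symbols `a(x, ξ)`. -/
abbrev Sym (d : ℕ) := Vec d → Vec d → ℂ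

variable {d : ℕ}

/-- Euclidean norm `|ξ|`. -/
def rnorm (ξ : Vec d) : ℝ := Real.sqrt (∑ i, (ξ i) ^ 2)

/-- Euclidean norm `|n|` of a lattice point. -/
def znorm (n : Zd d) : ℝ := Real.sqrt (∑ i, ((n i : ℝ)) ^ 2)

/-- Japanese bracket `⟨n⟩ = (1+|n|²)^{1/2}`. -/
def jb (n : Zd d) : ℝ := Real.sqrt (1 + ∑ i, ((n i : ℝ)) ^ 2)

/-- Japanese bracket `⟨ξ⟩` for real frequencies. -/
def jbR (ξ : Vec d) : ℝ := Real.sqrt (1 + ∑ i, (ξ i) ^ 2)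

/-- `2π`-periodicity in every coordinate. -/
def Periodic2pi (u : Fn d) : Prop :=
  ∀ (x : Vec d) (n : Zd d), u (fun i => x i + 2 * π * (n i : ℝ)) = u x

/-- A fundamental domain of the torus. -/
def box (d : ℕ) : Set (Vec d) := Set.univ.pi fun _ : Fin d => Set.Ioc (0 : ℝ) (2 * π)

/-- Fourier coefficient `û(n) = (2π)^{-d/2} ∫ u(x) e^{-i n·x} dx`. -/
def fCoeff (u : Fn d) (n : Zd d) : ℂ :=
  (((2 * π : ℝ) ^ (-(d : ℝ) / 2) : ℝ) : ℂ) *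
    ∫ x in box d, u x * Complex.exp (-Complex.I * ((∑ i, (n i : ℝ) * x i : ℝ) : ℂ))

/-- Squared Sobolev norm of a coefficient sequence. -/
def hsNormSq (s : ℝ) (c : Seq d) : ℝ := ∑' n : Zd d, jb n ^ (2 * s) * ‖c n‖ ^ 2

/-- Sobolev norm of a coefficient sequence. -/
def hsNorm (s : ℝ) (c : Seq d) : ℝ := Real.sqrt (hsNormSq s c)

/-- Membership of a coefficient sequence in `H^s`. -/
def InHsSeq (s : ℝ) (c : Seq d) : Prop :=
  Summable fun n : Zd d => jb n ^ (2 * s) * ‖c n‖ ^ 2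

/-- `H^s` norm of a function on the torus. -/
def sobNorm (s : ℝ) (u : Fn d) : ℝ := hsNorm s (fCoeff u)

/-- `u ∈ H^s(𝕋^d;ℂ)`: `u` is `2π`-periodic, its Fourier coefficients are `H^s`-summable,
and `u` is represented by its Fourier series. -/
def InHs (s : ℝ) (u : Fn d) : Prop :=
  Periodic2pi u ∧ InHsSeq s (fCoeff u) ∧
    ∀ x : Vec d, HasSum
      (fun n : Zd d => (((2 * π : ℝ) ^ (-(d : ℝ) / 2) : ℝ) : ℂ) * fCoeff u n *
        Complex.exp (Complex.I * ((∑ i, (n i : ℝ) * x i : ℝ) : ℂ))) (u x)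

/-- Partial derivative `∂_{x_i}` of a function. -/
def pdF (i : Fin d) (u : Fn d) : Fn d := fun x => fderiv ℝ u x (Pi.single i 1)

/-- Partial derivative `∂_{x_i}` of a symbol. -/
def pdx (i : Fin d) (a : Sym d) : Sym d := fun x ξ => fderiv ℝ (fun y => a y ξ) x (Pi.single i 1)

/-- Partial derivative `∂_{ξ_i}` of a symbol. -/
def pdxi (i : Fin d) (a : Sym d) : Sym d := fun x ξ => fderiv ℝ (fun η => a x η) ξ (Pi.single i 1)

/-- Iterated mixed partial derivative of a symbol along a list of directions
(`Sum.inl j` = `∂_{x_j}`, `Sum.inr j` = `∂_{ξ_j}`). -/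
def mderiv (L : List (Fin d ⊕ Fin d)) (a : Sym d) : Sym d :=
  L.foldr (fun i b => match i with | Sum.inl j => pdx j b | Sum.inr j => pdxi j b) a

/-- Number of `ξ`-derivatives in a list of directions. -/
def nXi (L : List (Fin d ⊕ Fin d)) : ℕ := (L.filter fun i => i.isRight).length

/-- The set of values whose supremum is the symbol seminorm `|a|_{𝒩^m_s}`. -/
def symVals (m : ℝ) (s : ℕ) (a : Sym d) : Set ℝ :=
  { r | ∃ (L : List (Fin d ⊕ Fin d)) (x ξ : Vec d), L.length ≤ s ∧
        r = jbR ξ ^ (-m + (nXi L : ℝ)) * ‖mderiv L a x ξ‖ }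

/-- Symbol seminorm `|a|_{𝒩^m_s}`. -/
def symNorm (m : ℝ) (s : ℕ) (a : Sym d) : ℝ := sSup (symVals m s a)

/-- Membership in the symbol class `𝒩^m_s`. -/
def InSymClass (m : ℝ) (s : ℕ) (a : Sym d) : Prop :=
  ContDiff ℝ (s : ℕ∞) (Function.uncurry a) ∧ (∀ ξ, Periodic2pi fun x => a x ξ) ∧
    BddAbove (symVals m s a)

/-- Poisson bracket `{a,b}`. -/
def poisson (a b : Sym d) : Sym d := fun x ξ =>
  ∑ j, (pdxi j a x ξ * pdx j b x ξ - pdx j a x ξ * pdxi j b x ξ)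

/-- The second-order bracket `σ(a,b)`. -/
def sigmaB (a b : Sym d) : Sym d := fun x ξ =>
  ∑ j, ∑ k,
    (pdxi j (pdxi k a) x ξ * pdx j (pdx k b) x ξ
      - 2 * pdx j (pdxi k a) x ξ * pdxi j (pdx k b) x ξ
      + pdx j (pdx k a) x ξ * pdxi j (pdxi k b) x ξ)

/-- An admissible cut-off function `χ`. -/
structure IsCutoff (χ : ℝ → ℝ) : Prop where
  smooth : ContDiff ℝ (⊤ : ℕ∞) χ
  mem : ∀ t : ℝ, χ t ∈ Set.Icc (0 : ℝ) 1
  eq_one : ∀ t : ℝ, |t| ≤ 5 / 4 → χ t = 1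
  eq_zero : ∀ t : ℝ, 8 / 5 ≤ |t| → χ t = 0

/-- `x`-Fourier coefficient `â(η, ξ)` of a symbol. -/
def symCoeff (a : Sym d) (η : Zd d) (ξ : Vec d) : ℂ := fCoeff (fun x => a x ξ) η

/-- Midpoint `(j+k)/2` of two lattice points. -/
def mid (j k : Zd d) : Vec d := fun i => ((j i + k i : ℤ) : ℝ) / 2

/-- The paradifferential cut-off factor `χ_ε(|j-k|/⟨j+k⟩) = χ(|j-k|/(ε⟨j+k⟩))`. -/
def cutFactor (χ : ℝ → ℝ) (ε : ℝ) (j k : Zd d) : ℝ :=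
  χ (znorm (j - k) / (ε * jb (j + k)))

/-- The Weyl paradifferential operator `T_a`, acting on Fourier coefficient sequences:
`(T_a h)^(j) = (2π)^{-d/2} Σ_k χ_ε(|j-k|/⟨j+k⟩) â(j-k,(j+k)/2) ĥ(k)`. -/
def paraC (χ : ℝ → ℝ) (ε : ℝ) (a : Sym d) (c : Seq d) : Seq d := fun j =>
  (((2 * π : ℝ) ^ (-(d : ℝ) / 2) : ℝ) : ℂ) *
    ∑' k : Zd d, ((cutFactor χ ε j k : ℝ) : ℂ) * symCoeff a (j - k) (mid j k) * c k

/-- The operator `R_a` built from the difference of two cut-offs. -/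
def remC (χ : ℝ → ℝ) (ε₁ ε₂ : ℝ) (a : Sym d) (c : Seq d) : Seq d := fun j =>
  (((2 * π : ℝ) ^ (-(d : ℝ) / 2) : ℝ) : ℂ) *
    ∑' k : Zd d, ((cutFactor χ ε₁ j k - cutFactor χ ε₂ j k : ℝ) : ℂ) *
      symCoeff a (j - k) (mid j k) * c k

/-- Wirtinger derivative `∂_{y_j} = (∂_{Re y_j} - i ∂_{Im y_j})/2`. -/
def wdP {n : ℕ} (j : Fin n) (G : (Fin n → ℂ) → ℂ) : (Fin n → ℂ) → ℂ := fun y =>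
  (fderiv ℝ G y (Pi.single j 1) - Complex.I * fderiv ℝ G y (Pi.single j Complex.I)) / 2

/-- Wirtinger derivative `∂_{ȳ_j} = (∂_{Re y_j} + i ∂_{Im y_j})/2`. -/
def wdM {n : ℕ} (j : Fin n) (G : (Fin n → ℂ) → ℂ) : (Fin n → ℂ) → ℂ := fun y =>
  (fderiv ℝ G y (Pi.single j 1) + Complex.I * fderiv ℝ G y (Pi.single j Complex.I)) / 2

/-- The 1-jet `(u, ∇u)` of a function, as a point of `ℂ^{d+1}`. -/
def jet (u : Fn d) (x : Vec d) : Fin (d + 1) → ℂ :=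
  Fin.cons (u x) fun j => pdF j u x

/-- The Hamiltonian nonlinearity
`P(u) = (∂_{ū}F)(u,∇u) - Σ_j ∂_{x_j}((∂_{ū_{x_j}}F)(u,∇u))`. -/
def Pop (F : (Fin (d + 1) → ℂ) → ℂ) (u : Fn d) : Fn d := fun x =>
  wdM 0 F (jet u x) - ∑ j, pdF j (fun y => wdM (Fin.succ j) F (jet u y)) x

/-- `F ∈ C^∞(ℂ^{d+1};ℝ)` in the real sense, with a zero of order at least 3 at the origin. -/
def GoodF (d : ℕ) (F : (Fin (d + 1) → ℂ) → ℂ) : Prop :=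
  ContDiff ℝ (⊤ : ℕ∞) F ∧ (∀ y, (F y).im = 0) ∧ ∀ k : ℕ, k ≤ 2 → iteratedFDeriv ℝ k F 0 = 0

/-- Global ellipticity (Hypothesis 1.1). -/
def Elliptic (d : ℕ) (F : (Fin (d + 1) → ℂ) → ℂ) : Prop :=
  ∃ c₁ > (0 : ℝ), ∃ c₂ > (0 : ℝ), ∀ (ξ : Vec d) (y : Fin (d + 1) → ℂ),
    (c₁ * ∑ i, (ξ i) ^ 2 ≤
      (∑ j, ∑ k, ((ξ j * ξ k : ℝ) : ℂ) *
        ((if j = k then 1 else 0) + wdP (Fin.succ j) (wdM (Fin.succ k) F) y)).re) ∧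
    (ξ ≠ 0 → c₂ ≤
      (1 + (∑ j, ∑ k, ((ξ j * ξ k : ℝ) : ℂ) * wdP (Fin.succ j) (wdM (Fin.succ k) F) y).re
            / ∑ i, (ξ i) ^ 2) ^ 2
        - ‖∑ j, ∑ k, ((ξ j * ξ k : ℝ) : ℂ) * wdM (Fin.succ j) (wdM (Fin.succ k) F) y‖ ^ 2
            / (∑ i, (ξ i) ^ 2) ^ 2)

/-- The symbol `a₂(x,ξ) = Σ_{j,k} (∂_{ū_{x_k}}∂_{u_{x_j}}F)(u,∇u) ξ_j ξ_k`. -/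
def a2sym (F : (Fin (d + 1) → ℂ) → ℂ) (u : Fn d) : Sym d := fun x ξ =>
  ∑ j, ∑ k, ((ξ j * ξ k : ℝ) : ℂ) * wdP (Fin.succ j) (wdM (Fin.succ k) F) (jet u x)

/-- The symbol `b₂(x,ξ) = Σ_{j,k} (∂_{ū_{x_k}}∂_{ū_{x_j}}F)(u,∇u) ξ_j ξ_k`. -/
def b2sym (F : (Fin (d + 1) → ℂ) → ℂ) (u : Fn d) : Sym d := fun x ξ =>
  ∑ j, ∑ k, ((ξ j * ξ k : ℝ) : ℂ) * wdM (Fin.succ j) (wdM (Fin.succ k) F) (jet u x)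

/-- The symbol `a₁(x,ξ) = (i/2) Σ_j ((∂_{ū}∂_{u_{x_j}}F) - (∂_u∂_{ū_{x_j}}F))(u,∇u) ξ_j`. -/
def a1sym (F : (Fin (d + 1) → ℂ) → ℂ) (u : Fn d) : Sym d := fun x ξ =>
  Complex.I / 2 * ∑ j, ((ξ j : ℝ) : ℂ) *
    (wdM 0 (wdP (Fin.succ j) F) (jet u x) - wdP 0 (wdM (Fin.succ j) F) (jet u x))

/-- Conjugation of a coefficient sequence: the sequence of `conj u`. -/
def starSeq (c : Seq d) : Seq d := fun n => (starRingEnd ℂ) (c (-n))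

/-- Pointwise conjugate of a function. -/
def starF (u : Fn d) : Fn d := fun x => (starRingEnd ℂ) (u x)

/-- Pointwise conjugate of a symbol. -/
def starSym (a : Sym d) : Sym d := fun x ξ => (starRingEnd ℂ) (a x ξ)

/-- The symbol `(x,ξ) ↦ conj (a(x,-ξ))`. -/
def flipSym (a : Sym d) : Sym d := fun x ξ => (starRingEnd ℂ) (a x (-ξ))

/-- The matrix `E = diag(1,-1)` as a sign vector. -/
def Em : Fin 2 → ℂ := ![1, -1]

/-- `Op^BW` of a 2×2 matrix of symbols, acting on vectors of coefficient sequences. -/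
def opBWmat (χ : ℝ → ℝ) (ε : ℝ) (A : Fin 2 → Fin 2 → Sym d) (C : Fin 2 → Seq d) :
    Fin 2 → Seq d := fun σ j => ∑ τ, paraC χ ε (A σ τ) (C τ) j

/-- The symbol `|ξ|²`. -/
def sq2sym (d : ℕ) : Sym d := fun _ ξ => (((rnorm ξ) ^ 2 : ℝ) : ℂ)

/-- The matrix of symbols `A₂(x,ξ)`. -/
def A2mat (F : (Fin (d + 1) → ℂ) → ℂ) (u : Fn d) : Fin 2 → Fin 2 → Sym d :=
  ![![a2sym F u, b2sym F u], ![flipSym (b2sym F u), a2sym F u]]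

/-- The matrix of symbols `A₁(x,ξ)`. -/
def A1mat (F : (Fin (d + 1) → ℂ) → ℂ) (u : Fn d) : Fin 2 → Fin 2 → Sym d :=
  ![![a1sym F u, 0], ![0, flipSym (a1sym F u)]]

/-- The full matrix of symbols `|ξ|²𝟙 + A₂(x,ξ) + A₁(x,ξ)`. -/
def sysSym (F : (Fin (d + 1) → ℂ) → ℂ) (u : Fn d) : Fin 2 → Fin 2 → Sym d := fun σ τ =>
  fun x ξ => (if σ = τ then sq2sym d x ξ else 0) + A2mat F u σ τ x ξ + A1mat F u σ τ x ξ

/-- `H^s` norm of a vector of coefficient sequences. -/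
def hsNormVec (s : ℝ) (C : Fin 2 → Seq d) : ℝ := hsNorm s (C 0) + hsNorm s (C 1)

/-- Membership of a vector of coefficient sequences in `H^s`. -/
def InHsVec (s : ℝ) (C : Fin 2 → Seq d) : Prop := InHsSeq s (C 0) ∧ InHsSeq s (C 1)

/-- The `L²` pairing `(U,V) = ∫ (u v̄ + ū v)`, at the level of Fourier coefficients. -/
def pairL2 (C E : Fin 2 → Seq d) : ℂ :=
  ∑' n : Zd d, (C 0 n * (starRingEnd ℂ) (E 0 n) + C 1 n * (starRingEnd ℂ) (E 1 n))

/-- The scalar `L²` pairing, at the level of Fourier coefficients. -/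
def pairS (c e : Seq d) : ℂ := ∑' n : Zd d, c n * (starRingEnd ℂ) (e n)

/-- A matrix of operators is real-to-real: it preserves the subspace `𝒰 = {(u, ū)}`. -/
def PreservesReality (M : (Fin 2 → Seq d) → (Fin 2 → Seq d)) : Prop :=
  ∀ c : Seq d, M ![c, starSeq c] 1 = starSeq (M ![c, starSeq c] 0)

/-- The coefficient vector of `(v(t), conj v(t))`. -/
def Vvec (v : ℝ → Fn d) (t : ℝ) : Fin 2 → Seq d :=
  ![fCoeff (v t), starSeq (fCoeff (v t))]

/-- `V = (v, v̄)` solves `V̇ = iE Op^BW(|ξ|²𝟙 + A₂ + A₁)V` on `[0,T)`. -/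
def SolvesLin (χ : ℝ → ℝ) (ε : ℝ) (F : (Fin (d + 1) → ℂ) → ℂ) (T : ℝ)
    (u v : ℝ → Fn d) : Prop :=
  ∀ᵐ t ∂(volume.restrict (Set.Ico (0 : ℝ) T)), ∀ (σ : Fin 2) (n : Zd d),
    HasDerivAt (fun τ => Vvec v τ σ n)
      (Complex.I * Em σ * opBWmat χ ε (sysSym F (u t)) (Vvec v t) σ n) t

/-- The regularity hypothesis (4.1):
`u ∈ L^∞([0,T);H^s) ∩ Lip([0,T);H^{s-2})`, with
`sup_t ‖u(t)‖_{H^{2s₀+7}} ≤ r` and `‖∂_t u‖_{H^{2s₀+5}} ≤ r` (as a Lipschitz bound). -/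
def RegHyp (s₀ : ℕ) (s T r : ℝ) (u : ℝ → Fn d) : Prop :=
  (∀ t ∈ Set.Ico (0 : ℝ) T, InHs s (u t)) ∧
  (∃ M : ℝ, ∀ t ∈ Set.Ico (0 : ℝ) T, sobNorm s (u t) ≤ M) ∧
  (∃ L : ℝ, ∀ t₁ ∈ Set.Ico (0 : ℝ) T, ∀ t₂ ∈ Set.Ico (0 : ℝ) T,
    sobNorm (s - 2) (u t₁ - u t₂) ≤ L * |t₁ - t₂|) ∧
  (∀ t ∈ Set.Ico (0 : ℝ) T, sobNorm (2 * (s₀ : ℝ) + 7) (u t) ≤ r) ∧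
  (∀ t₁ ∈ Set.Ico (0 : ℝ) T, ∀ t₂ ∈ Set.Ico (0 : ℝ) T,
    sobNorm (2 * (s₀ : ℝ) + 5) (u t₁ - u t₂) ≤ r * |t₁ - t₂|)

/-- `v ∈ L^∞([0,T);H^s) ∩ Lip([0,T);H^{s-2})`. -/
def RegSol (s T : ℝ) (v : ℝ → Fn d) : Prop :=
  (∀ t ∈ Set.Ico (0 : ℝ) T, InHs s (v t)) ∧
  (∃ M : ℝ, ∀ t ∈ Set.Ico (0 : ℝ) T, sobNorm s (v t) ≤ M) ∧
  (∃ L : ℝ, ∀ t₁ ∈ Set.Ico (0 : ℝ) T, ∀ t₂ ∈ Set.Ico (0 : ℝ) T,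
    sobNorm (s - 2) (v t₁ - v t₂) ≤ L * |t₁ - t₂|)

/-- The high-frequency cut-off `𝒳_R(ξ) = 1 - χ(|ξ|/R)`. -/
def cutXR (χ : ℝ → ℝ) (R : ℝ) (ξ : Vec d) : ℝ := 1 - χ (rnorm ξ / R)

/-- `ã_{2,R}(x,ξ) = |ξ|^{-2} a₂(x,ξ) 𝒳_R(ξ)`. -/
def a2til (F : (Fin (d + 1) → ℂ) → ℂ) (u : Fn d) (χ : ℝ → ℝ) (R : ℝ) : Sym d := fun x ξ =>
  ((((rnorm ξ) ^ 2)⁻¹ * cutXR χ R ξ : ℝ) : ℂ) * a2sym F u x ξ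

/-- `b̃_{2,R}(x,ξ) = |ξ|^{-2} b₂(x,ξ) 𝒳_R(ξ)`. -/
def b2til (F : (Fin (d + 1) → ℂ) → ℂ) (u : Fn d) (χ : ℝ → ℝ) (R : ℝ) : Sym d := fun x ξ =>
  ((((rnorm ξ) ^ 2)⁻¹ * cutXR χ R ξ : ℝ) : ℂ) * b2sym F u x ξ

/-- `λ₂ = ((1+ã_{2,R})² - |b̃_{2,R}|²)^{1/2}`. -/
def lam2 (F : (Fin (d + 1) → ℂ) → ℂ) (u : Fn d) (χ : ℝ → ℝ) (R : ℝ) :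
    Vec d → Vec d → ℝ := fun x ξ =>
  Real.sqrt ((1 + (a2til F u χ R x ξ).re) ^ 2 - ‖b2til F u χ R x ξ‖ ^ 2)

/-- The normalizing denominator `(2λ₂(1+ã_{2,R}+λ₂))^{1/2}`. -/
def sden (F : (Fin (d + 1) → ℂ) → ℂ) (u : Fn d) (χ : ℝ → ℝ) (R : ℝ) :
    Vec d → Vec d → ℝ := fun x ξ =>
  Real.sqrt (2 * lam2 F u χ R x ξ * (1 + (a2til F u χ R x ξ).re + lam2 F u χ R x ξ))

/-- The symbol `s₁`. -/
def s1sym (F : (Fin (d + 1) → ℂ) → ℂ) (u : Fn d) (χ : ℝ → ℝ) (R : ℝ) : Sym d := fun x ξ =>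
  (((1 + (a2til F u χ R x ξ).re + lam2 F u χ R x ξ) / sden F u χ R x ξ : ℝ) : ℂ)

/-- The symbol `s₂`. -/
def s2sym (F : (Fin (d + 1) → ℂ) → ℂ) (u : Fn d) (χ : ℝ → ℝ) (R : ℝ) : Sym d := fun x ξ =>
  -b2til F u χ R x ξ / ((sden F u χ R x ξ : ℝ) : ℂ)

/-- `ã⁺_{2,R} = λ₂ - 1`. -/
def a2plus (F : (Fin (d + 1) → ℂ) → ℂ) (u : Fn d) (χ : ℝ → ℝ) (R : ℝ) : Sym d := fun x ξ =>
  ((lam2 F u χ R x ξ - 1 : ℝ) : ℂ)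

/-- The diagonalized second-order symbol `a₂^{(1)}(x,ξ) = |ξ|² ã⁺_{2,R}(x,ξ)`. -/
def a2one (F : (Fin (d + 1) → ℂ) → ℂ) (u : Fn d) (χ : ℝ → ℝ) (R : ℝ) : Sym d := fun x ξ =>
  (((rnorm ξ) ^ 2 * (lam2 F u χ R x ξ - 1) : ℝ) : ℂ)

/-- The real scalar symbol `ℒ(x,ξ) = |ξ|² + a₂^{(1)}(x,ξ)`. -/
def Lscal (F : (Fin (d + 1) → ℂ) → ℂ) (u : Fn d) (χ : ℝ → ℝ) (R : ℝ) :
    Vec d → Vec d → ℝ := fun x ξ =>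
  (rnorm ξ) ^ 2 + (rnorm ξ) ^ 2 * (lam2 F u χ R x ξ - 1)

/-- The matrix `S(x,ξ)`. -/
def Smat (F : (Fin (d + 1) → ℂ) → ℂ) (u : Fn d) (χ : ℝ → ℝ) (R : ℝ) (x ξ : Vec d) :
    Matrix (Fin 2) (Fin 2) ℂ :=
  !![s1sym F u χ R x ξ, s2sym F u χ R x ξ;
     (starRingEnd ℂ) (s2sym F u χ R x ξ), s1sym F u χ R x ξ]

/-- The matrix `S^{-1}(x,ξ)`. -/
def SmatInv (F : (Fin (d + 1) → ℂ) → ℂ) (u : Fn d) (χ : ℝ → ℝ) (R : ℝ) (x ξ : Vec d) :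
    Matrix (Fin 2) (Fin 2) ℂ :=
  !![s1sym F u χ R x ξ, -s2sym F u χ R x ξ;
     -(starRingEnd ℂ) (s2sym F u χ R x ξ), s1sym F u χ R x ξ]

/-- The matrix `Ã_{2,R}(x,ξ)`. -/
def A2tilMat (F : (Fin (d + 1) → ℂ) → ℂ) (u : Fn d) (χ : ℝ → ℝ) (R : ℝ) (x ξ : Vec d) :
    Matrix (Fin 2) (Fin 2) ℂ :=
  !![a2til F u χ R x ξ, b2til F u χ R x ξ;
     (starRingEnd ℂ) (b2til F u χ R x (-ξ)), a2til F u χ R x ξ]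

/-- The matrix `E = diag(1,-1)`. -/
def EmatM : Matrix (Fin 2) (Fin 2) ℂ := !![1, 0; 0, -1]

/-- The matrix of symbols `S^{-1}(x,ξ)`. -/
def SinvMatSym (F : (Fin (d + 1) → ℂ) → ℂ) (u : Fn d) (χ : ℝ → ℝ) (R : ℝ) :
    Fin 2 → Fin 2 → Sym d :=
  ![![s1sym F u χ R, fun x ξ => -s2sym F u χ R x ξ],
    ![fun x ξ => -(starRingEnd ℂ) (s2sym F u χ R x ξ), s1sym F u χ R]]

/-- The entry `s₁^{(1)}` of the matrix `S₁`. -/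
def s1_1 (F : (Fin (d + 1) → ℂ) → ℂ) (u : Fn d) (χ : ℝ → ℝ) (R : ℝ) : Sym d := fun x ξ =>
  1 / (2 * Complex.I) *
    (poisson (s2sym F u χ R) (starSym (s2sym F u χ R)) x ξ * s1sym F u χ R x ξ
      + 2 * poisson (s1sym F u χ R) (s2sym F u χ R) x ξ *
          (starRingEnd ℂ) (s2sym F u χ R x ξ))

/-- The entry `s₂^{(1)}` of the matrix `S₁`. -/
def s2_1 (F : (Fin (d + 1) → ℂ) → ℂ) (u : Fn d) (χ : ℝ → ℝ) (R : ℝ) : Sym d := fun x ξ =>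
  1 / (2 * Complex.I) *
    (poisson (s2sym F u χ R) (starSym (s2sym F u χ R)) x ξ * s2sym F u χ R x ξ
      + 2 * poisson (s1sym F u χ R) (s2sym F u χ R) x ξ * s1sym F u χ R x ξ)

/-- The matrix `S₁(x,ξ)`. -/
def S1mat (F : (Fin (d + 1) → ℂ) → ℂ) (u : Fn d) (χ : ℝ → ℝ) (R : ℝ) (x ξ : Vec d) :
    Matrix (Fin 2) (Fin 2) ℂ :=
  (1 / (2 * Complex.I)) •
    (!![poisson (s2sym F u χ R) (starSym (s2sym F u χ R)) x ξ,
          2 * poisson (s1sym F u χ R) (s2sym F u χ R) x ξ;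
        -2 * poisson (s1sym F u χ R) (starSym (s2sym F u χ R)) x (-ξ),
          poisson (s2sym F u χ R) (starSym (s2sym F u χ R)) x (-ξ)] *
      Smat F u χ R x ξ)

/-- The symbol `g₁`. -/
def g1sym (F : (Fin (d + 1) → ℂ) → ℂ) (u : Fn d) (χ : ℝ → ℝ) (R : ℝ) : Sym d := fun x ξ =>
  1 / (2 * Complex.I) * poisson (s1_1 F u χ R) (s1sym F u χ R) x ξ
    - 1 / (2 * Complex.I) * poisson (s2_1 F u χ R) (starSym (s2sym F u χ R)) x ξ
    + 1 / 8 * sigmaB (s2sym F u χ R) (starSym (s2sym F u χ R)) x ξ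

/-- The symbol `g₂`. -/
def g2sym (F : (Fin (d + 1) → ℂ) → ℂ) (u : Fn d) (χ : ℝ → ℝ) (R : ℝ) : Sym d := fun x ξ =>
  -(1 / (2 * Complex.I)) * poisson (s1_1 F u χ R) (s2sym F u χ R) x ξ
    + 1 / (2 * Complex.I) * poisson (s2_1 F u χ R) (s1sym F u χ R) x ξ

/-- The derivative operator `∂_{x_i}` at the level of Fourier coefficients. -/
def dOp (i : Fin d) (c : Seq d) : Seq d := fun n => Complex.I * ((n i : ℝ) : ℂ) * c n

/-- A positive constant depending monotonically on a size parameter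
(hence bounded from above as the parameter goes to zero). -/
def GoodConst (C : ℝ → ℝ) : Prop := Monotone C ∧ ∀ x : ℝ, 0 < C x

/-! Reality and parity are algebraic: for real `F`, conjugation exchanges `∂_{y_j}` and `∂_{ȳ_j}`,
and second derivatives commute.

For the estimates, each of `a₂`, `b₂`, `a₁` is a finite sum of terms `Q(ξ) G(u, ∇u)`, where `Q` is a
monomial and `G` is a combination of second derivatives of `F`; since `F` vanishes to third order,
`G(0) = 0`. Mixed derivatives of such a product split into a `ξ`-derivative of `Q` and an
`x`-derivative of `G(u, ∇u)`. By Cauchy-Schwarz on the Fourier series, `H^{p+s₀+1}` embeds into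
`C^{p+1}`, so the jet `(u, ∇u)` is bounded in `C^p` by `‖u‖_{H^{p+s₀+1}}`. Finally `J ↦ G ∘ J` maps
`C^p` to itself, with a bound linear in `‖J‖_{C^p}` on bounded sets because `G(0) = 0`. -/

/-! ### Functions with bounded derivatives -/

section CkBound

variable {ι E V W X : Type*} [NormedAddCommGroup E] [NormedSpace ℝ E]
  [NormedAddCommGroup V] [NormedSpace ℝ V] [NormedAddCommGroup W] [NormedSpace ℝ W]
  [NormedAddCommGroup X] [NormedSpace ℝ X] {p q : ℕ} {M N : ℝ}

/-- `f` is of class `C^p` and its Fréchet derivatives of order at most `p` are bounded by `M`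
everywhere: `f` lies in the closed ball of radius `M` of `C^p_b`. -/
structure HasCkBound (p : ℕ) (M : ℝ) (f : E → V) : Prop where
  contDiff : ContDiff ℝ p f
  norm_iteratedFDeriv_le : ∀ k ≤ p, ∀ x, ‖iteratedFDeriv ℝ k f x‖ ≤ M

namespace HasCkBound

lemma norm_le {f : E → V} (hf : HasCkBound p M f) (x : E) : ‖f x‖ ≤ M := by
  simpa using hf.norm_iteratedFDeriv_le 0 p.zero_le x

lemma nonneg {f : E → V} (hf : HasCkBound p M f) : 0 ≤ M :=
  (norm_nonneg _).trans (hf.norm_le 0)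

lemma mono {f : E → V} (hf : HasCkBound p M f) (hMN : M ≤ N) : HasCkBound p N f :=
  ⟨hf.contDiff, fun k hk x => (hf.norm_iteratedFDeriv_le k hk x).trans hMN⟩

lemma of_le {f : E → V} (hf : HasCkBound p M f) (hqp : q ≤ p) : HasCkBound q M f :=
  ⟨hf.contDiff.of_le (mod_cast hqp), fun k hk => hf.norm_iteratedFDeriv_le k (hk.trans hqp)⟩

lemma fderiv {f : E → V} (hf : HasCkBound (p + 1) M f) : HasCkBound p M (fderiv ℝ f) :=
  ⟨hf.contDiff.fderiv_right (mod_cast le_rfl), fun k hk x => by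
    rw [norm_iteratedFDeriv_fderiv]
    exact hf.norm_iteratedFDeriv_le (k + 1) (Nat.succ_le_succ hk) x⟩

lemma of_fderiv {f : E → V} (hd : Differentiable ℝ f) (h0 : ∀ x, ‖f x‖ ≤ M)
    (hf : HasCkBound p M (_root_.fderiv ℝ f)) : HasCkBound (p + 1) M f where
  contDiff := by
    push_cast
    exact contDiff_succ_iff_fderiv.2 ⟨hd, by simp, hf.contDiff⟩
  norm_iteratedFDeriv_le
    | 0, _, x => by simpa using h0 x
    | k + 1, hk, x => by
      rw [← norm_iteratedFDeriv_fderiv]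
      exact hf.norm_iteratedFDeriv_le k (Nat.le_of_succ_le_succ hk) x

lemma add {f g : E → V} (hf : HasCkBound p M f) (hg : HasCkBound p N g) :
    HasCkBound p (M + N) (f + g) :=
  ⟨hf.contDiff.add hg.contDiff, fun k hk x => by
    rw [iteratedFDeriv_add_apply (hf.contDiff.contDiffAt.of_le (mod_cast hk))
      (hg.contDiff.contDiffAt.of_le (mod_cast hk))]
    exact norm_add_le_of_le (hf.norm_iteratedFDeriv_le k hk x) (hg.norm_iteratedFDeriv_le k hk x)⟩

lemma clm_comp {f : E → V} (L : V →L[ℝ] W) (hf : HasCkBound p M f) :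
    HasCkBound p (‖L‖ * M) (L ∘ f) :=
  ⟨L.contDiff.comp hf.contDiff, fun k hk x =>
    (L.norm_iteratedFDeriv_comp_left hf.contDiff.contDiffAt (mod_cast hk)).trans
      (mul_le_mul_of_nonneg_left (hf.norm_iteratedFDeriv_le k hk x) (norm_nonneg L))⟩

lemma tsum [CompleteSpace V] {f : ι → E → V} {v : ι → ℝ} (hv : Summable v)
    (hf : ∀ i, HasCkBound p (v i) (f i)) : HasCkBound p (∑' i, v i) fun x => ∑' i, f i x := by
  have hsum (k : ℕ) (_ : (k : ℕ∞) ≤ p) : Summable v := hv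
  have hbound (k : ℕ) (i : ι) (x : E) (hk : (k : ℕ∞) ≤ p) : ‖iteratedFDeriv ℝ k (f i) x‖ ≤ v i :=
    (hf i).norm_iteratedFDeriv_le k (mod_cast hk) x
  refine ⟨contDiff_tsum (fun i => (hf i).contDiff) hsum hbound, fun k hk x => ?_⟩
  rw [iteratedFDeriv_tsum_apply (fun i => (hf i).contDiff) hsum hbound (mod_cast hk)]
  exact tsum_of_norm_bounded hv.hasSum fun i => hbound k i x (mod_cast hk)

lemma bilinear {f : E → V} {g : E → W} (B : V →L[ℝ] W →L[ℝ] X) (hB : ‖B‖ ≤ 1)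
    (hf : HasCkBound p M f) (hg : HasCkBound p N g) :
    HasCkBound p (2 ^ p * (M * N)) fun x => B (f x) (g x) := by
  refine ⟨B.isBoundedBilinearMap.contDiff.comp₂ hf.contDiff hg.contDiff, fun k hk x => ?_⟩
  calc ‖iteratedFDeriv ℝ k (fun x => B (f x) (g x)) x‖
      ≤ ∑ i ∈ Finset.range (k + 1), (k.choose i : ℝ) * ‖iteratedFDeriv ℝ i f x‖ *
          ‖iteratedFDeriv ℝ (k - i) g x‖ :=
        B.norm_iteratedFDeriv_le_of_bilinear_of_le_one hf.contDiff hg.contDiff x (mod_cast hk) hB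
    _ ≤ ∑ i ∈ Finset.range (k + 1), (k.choose i : ℝ) * (M * N) := by
        refine Finset.sum_le_sum fun i hi => ?_
        have hik : i ≤ k := Finset.mem_range_succ_iff.1 hi
        rw [mul_assoc]
        gcongr
        · exact hf.nonneg
        · exact hf.norm_iteratedFDeriv_le i (hik.trans hk) x
        · exact hg.norm_iteratedFDeriv_le (k - i) ((Nat.sub_le k i).trans hk) x
    _ = 2 ^ k * (M * N) := by
        rw [← Finset.sum_mul]
        exact_mod_cast congrArg (fun n : ℕ => (n : ℝ) * (M * N)) (Nat.sum_range_choose k)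
    _ ≤ 2 ^ p * (M * N) := by
        have := mul_nonneg hf.nonneg hg.nonneg
        gcongr
        exact one_le_two

end HasCkBound

section Composition

variable [ProperSpace V]

lemma exists_norm_iteratedFDeriv_le_of_mem_closedBall {G : V → W} (hG : ContDiff ℝ p G) (R : ℝ) :
    ∃ B, 0 ≤ B ∧ ∀ k ≤ p, ∀ y ∈ Metric.closedBall (0 : V) R, ‖iteratedFDeriv ℝ k G y‖ ≤ B := by
  have hbdd (k : Finset.range (p + 1)) : ∃ B, ∀ y ∈ Metric.closedBall (0 : V) R,
      ‖iteratedFDeriv ℝ k G y‖ ≤ B :=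
    (isCompact_closedBall 0 R).exists_bound_of_continuousOn
      (hG.continuous_iteratedFDeriv (mod_cast Finset.mem_range_succ_iff.1 k.2)).continuousOn
  choose B hB using hbdd
  refine ⟨∑ k, |B k|, by positivity, fun k hk y hy => ?_⟩
  let k' : Finset.range (p + 1) := ⟨k, Finset.mem_range_succ_iff.2 hk⟩
  calc ‖iteratedFDeriv ℝ k G y‖ ≤ |B k'| := (hB k' y hy).trans (le_abs_self _)
    _ ≤ ∑ k, |B k| := Finset.single_le_sum (fun k _ => abs_nonneg (B k)) (Finset.mem_univ k')

lemma exists_hasCkBound_comp {G : V → W} (hG : ContDiff ℝ p G) (R : ℝ) :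
    ∃ K, 0 ≤ K ∧ ∀ J : E → V, HasCkBound p R J → HasCkBound p K (G ∘ J) := by
  obtain ⟨B, hB0, hB⟩ := exists_norm_iteratedFDeriv_le_of_mem_closedBall hG R
  have hD : 1 ≤ max R 1 := le_max_right R 1
  refine ⟨p.factorial * B * max R 1 ^ p, by positivity, fun J hJ =>
    ⟨hG.comp hJ.contDiff, fun k hk x => ?_⟩⟩
  have hJx : J x ∈ Metric.closedBall (0 : V) R := mem_closedBall_zero_iff.2 (hJ.norm_le x)
  calc ‖iteratedFDeriv ℝ k (G ∘ J) x‖ ≤ k.factorial * B * max R 1 ^ k := by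
        refine norm_iteratedFDeriv_comp_le hG hJ.contDiff (mod_cast hk) x
          (fun i hi => hB i (hi.trans hk) _ hJx) fun i hi1 hik => ?_
        exact (hJ.norm_iteratedFDeriv_le i (hik.trans hk) x).trans
          ((le_max_left R 1).trans (le_self_pow₀ hD (Nat.one_le_iff_ne_zero.1 hi1)))
    _ ≤ p.factorial * B * max R 1 ^ p := by gcongr

lemma exists_norm_comp_le_mul {G : V → W} (hG : ContDiff ℝ 1 G) (hG0 : G 0 = 0) (R : ℝ) :
    ∃ K, 0 ≤ K ∧ ∀ y ∈ Metric.closedBall (0 : V) R, ‖G y‖ ≤ K * ‖y‖ := by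
  obtain ⟨K, hK0, hK⟩ := exists_norm_iteratedFDeriv_le_of_mem_closedBall (p := 1) hG R
  refine ⟨K, hK0, fun y hy => ?_⟩
  have h0 : (0 : V) ∈ Metric.closedBall (0 : V) R :=
    Metric.mem_closedBall_self (dist_nonneg.trans hy)
  have hfderiv (z : V) (hz : z ∈ Metric.closedBall (0 : V) R) : ‖fderiv ℝ G z‖ ≤ K := by
    rw [← norm_iteratedFDeriv_one]
    exact hK 1 le_rfl z hz
  simpa [hG0] using (convex_closedBall (0 : V) R).norm_image_sub_le_of_norm_fderiv_le
    (fun z _ => (hG.differentiable one_ne_zero).differentiableAt) hfderiv h0 hy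

/- Linearity in `M` comes from the factor `DJ` in `D(G ∘ J) = (DG ∘ J) · DJ`, while `DG ∘ J` is only
bounded in terms of `R`. -/
lemma exists_hasCkBound_comp_mul {G : V → W} (hG : ContDiff ℝ (p + 1) G) (hG0 : G 0 = 0) (R : ℝ) :
    ∃ K, 0 ≤ K ∧ ∀ M ≤ R, ∀ J : E → V, HasCkBound p M J → HasCkBound p (K * M) (G ∘ J) := by
  obtain ⟨K₀, hK₀, hlip⟩ := exists_norm_comp_le_mul (hG.of_le le_add_self) hG0 R
  have hnorm {M : ℝ} (hMR : M ≤ R) {J : E → V} (hJ : HasCkBound p M J) (x : E) :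
      ‖G (J x)‖ ≤ K₀ * M :=
    (hlip _ (mem_closedBall_zero_iff.2 ((hJ.norm_le x).trans hMR))).trans
      (mul_le_mul_of_nonneg_left (hJ.norm_le x) hK₀)
  cases p with
  | zero =>
    refine ⟨K₀, hK₀, fun M hMR J hJ => ⟨(hG.of_le (by simp)).comp hJ.contDiff, ?_⟩⟩
    rintro k hk x
    obtain rfl := Nat.le_zero.1 hk
    simpa using hnorm hMR hJ x
  | succ p =>
    have hG' : ContDiff ℝ p (fderiv ℝ G) := hG.fderiv_right (by push_cast; exact le_self_add)
    have hGd : Differentiable ℝ G := hG.differentiable (by simp)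
    obtain ⟨K₁, hK₁, hcomp⟩ := exists_hasCkBound_comp (E := E) hG' R
    refine ⟨K₀ + 2 ^ p * K₁, by positivity, fun M hMR J hJ => ?_⟩
    have hM := hJ.nonneg
    have hJd : Differentiable ℝ J := hJ.contDiff.differentiable (by simp)
    have hchain : fderiv ℝ (G ∘ J) = fun x =>
        ContinuousLinearMap.compL ℝ E V W ((fderiv ℝ G ∘ J) x) (fderiv ℝ J x) :=
      funext fun x => fderiv_comp x hGd.differentiableAt hJd.differentiableAt
    have hfderiv : HasCkBound p (2 ^ p * (K₁ * M)) (fderiv ℝ (G ∘ J)) := by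
      rw [hchain]
      exact (hcomp J ((hJ.of_le p.le_succ).mono hMR)).bilinear _
        (ContinuousLinearMap.norm_compL_le ℝ E V W) hJ.fderiv
    refine .of_fderiv (hGd.comp hJd) (fun x => (hnorm hMR hJ x).trans ?_) (hfderiv.mono ?_)
    · gcongr
      exact le_add_of_nonneg_right (by positivity)
    · rw [← mul_assoc]
      gcongr
      exact le_add_of_nonneg_left hK₀

end Composition

end CkBound

/-! ### The Japanese bracket -/

lemma one_le_jbR (ξ : Vec d) : 1 ≤ jbR ξ :=
  Real.one_le_sqrt.2 (le_add_of_nonneg_right (by positivity))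

lemma jbR_pos (ξ : Vec d) : 0 < jbR ξ :=
  one_pos.trans_le (one_le_jbR ξ)

lemma norm_le_jbR (ξ : Vec d) : ‖ξ‖ ≤ jbR ξ := by
  refine (pi_norm_le_iff_of_nonneg (jbR_pos ξ).le).2 fun i => Real.abs_le_sqrt ?_
  calc ξ i ^ 2 ≤ ∑ j, ξ j ^ 2 :=
        Finset.single_le_sum (fun j _ => sq_nonneg (ξ j)) (Finset.mem_univ i)
    _ ≤ 1 + ∑ j, ξ j ^ 2 := le_add_of_nonneg_left zero_le_one

lemma one_le_jb (n : Zd d) : 1 ≤ jb n :=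
  one_le_jbR fun i => (n i : ℝ)

lemma jb_pos (n : Zd d) : 0 < jb n :=
  jbR_pos fun i => (n i : ℝ)

lemma norm_le_jb (n : Zd d) : ‖n‖ ≤ jb n := by
  refine (pi_norm_le_iff_of_nonneg (jb_pos n).le).2 fun i => ?_
  rw [← Int.norm_cast_real]
  exact (norm_le_pi_norm (fun i => (n i : ℝ)) i).trans (norm_le_jbR _)

lemma summable_norm_rpow_of_lt_neg_card {ι : Type*} [Fintype ι] {r : ℝ}
    (hr : r < -Fintype.card ι) : Summable fun n : ι → ℤ => ‖n‖ ^ r := by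
  classical
  let L : Submodule ℤ (ι → ℝ) := Submodule.span ℤ (Set.range (Pi.basisFun ℝ ι))
  let e : L ≃ₗ[ℤ] (ι → ℤ) := ((Pi.basisFun ℝ ι).restrictScalars ℤ).equivFun
  have hrank : Module.finrank ℤ L = Fintype.card ι := by
    rw [ZLattice.rank ℝ L, Module.finrank_pi]
  have he (z : L) (i : ι) : ((e z i : ℤ) : ℝ) = (z : ι → ℝ) i := by
    simpa [e] using (Pi.basisFun ℝ ι).restrictScalars_repr_apply ℤ z i
  have hnorm (z : L) : ‖e z‖ = ‖z‖ := by
    rw [Submodule.coe_norm, Pi.norm_def, Pi.norm_def]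
    congr 2 with i
    simp [← he, Int.norm_eq_abs]
  refine (e.toEquiv.summable_iff (f := fun n : ι → ℤ => ‖n‖ ^ r)).1 ?_
  simpa only [Function.comp_def, LinearEquiv.coe_toEquiv, hnorm] using
    ZLattice.summable_norm_rpow L r (by rwa [hrank])

lemma summable_jb_rpow {r : ℝ} (hr : r < -d) : Summable fun n : Zd d => jb n ^ r := by
  have hsum : Summable fun n : Zd d => ‖n‖ ^ r :=
    summable_norm_rpow_of_lt_neg_card (by simpa using hr)
  refine hsum.of_norm_bounded_eventually ?_
  filter_upwards [(Set.finite_singleton (0 : Zd d)).compl_mem_cofinite] with n hn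
  rw [Real.norm_of_nonneg (Real.rpow_nonneg (jb_pos n).le r)]
  exact Real.rpow_le_rpow_of_nonpos (norm_pos_iff.2 hn) (norm_le_jb n)
    (hr.le.trans (neg_nonpos.2 d.cast_nonneg))

/-! ### The Sobolev embedding -/

lemma contDiff_cexp_I_mul {E : Type*} [NormedAddCommGroup E] [NormedSpace ℝ E] {n : WithTop ℕ∞}
    (ℓ : E →L[ℝ] ℝ) : ContDiff ℝ n fun x => cexp (I * ℓ x) :=
  (contDiff_const.mul (ofRealCLM.contDiff.comp ℓ.contDiff)).cexp

lemma norm_iteratedFDeriv_cexp_I_mul_le {E : Type*} [NormedAddCommGroup E] [NormedSpace ℝ E]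
    (ℓ : E →L[ℝ] ℝ) (k : ℕ) (x : E) :
    ‖iteratedFDeriv ℝ k (fun x => cexp (I * ℓ x)) x‖ ≤ ‖ℓ‖ ^ k := by
  let T : ℂ →L[ℝ] E →L[ℝ] ℂ :=
    (ContinuousLinearMap.toSpanSingleton ℂ (I • ofRealCLM.comp ℓ)).restrictScalars ℝ
  have hT : ‖T‖ ≤ ‖ℓ‖ := by
    rw [ContinuousLinearMap.norm_restrictScalars, ContinuousLinearMap.norm_toSpanSingleton,
      norm_smul, norm_I, one_mul]
    exact (ContinuousLinearMap.opNorm_comp_le _ _).trans (by simp)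
  have hfderiv : fderiv ℝ (fun x => cexp (I * ℓ x)) = T ∘ fun x => cexp (I * ℓ x) := by
    ext1 x
    exact ((ofRealCLM.comp ℓ).hasFDerivAt.const_mul I).cexp.fderiv
  induction k with
  | zero => simp [norm_exp]
  | succ k ih =>
    calc ‖iteratedFDeriv ℝ (k + 1) (fun x => cexp (I * ℓ x)) x‖
        = ‖iteratedFDeriv ℝ k (T ∘ fun x => cexp (I * ℓ x)) x‖ := by
          rw [← norm_iteratedFDeriv_fderiv, hfderiv]
      _ ≤ ‖T‖ * ‖iteratedFDeriv ℝ k (fun x => cexp (I * ℓ x)) x‖ :=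
          T.norm_iteratedFDeriv_comp_left (contDiff_cexp_I_mul ℓ).contDiffAt le_rfl
      _ ≤ ‖ℓ‖ * ‖ℓ‖ ^ k := by gcongr
      _ = ‖ℓ‖ ^ (k + 1) := (pow_succ' _ _).symm

lemma hasCkBound_const_mul_cexp {E : Type*} [NormedAddCommGroup E] [NormedSpace ℝ E] {D : ℝ}
    (hD : 1 ≤ D) {ℓ : E →L[ℝ] ℝ} (hℓ : ‖ℓ‖ ≤ D) (q : ℕ) (c : ℂ) :
    HasCkBound q (‖c‖ * D ^ q) fun x => c * cexp (I * ℓ x) := by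
  refine ⟨contDiff_const.mul (contDiff_cexp_I_mul ℓ), fun k hk x => ?_⟩
  calc ‖iteratedFDeriv ℝ k (fun x => c • cexp (I * ℓ x)) x‖
      = ‖c‖ * ‖iteratedFDeriv ℝ k (fun x => cexp (I * ℓ x)) x‖ := by
        rw [iteratedFDeriv_const_smul_apply' (contDiff_cexp_I_mul ℓ).contDiffAt, norm_smul]
    _ ≤ ‖c‖ * ‖ℓ‖ ^ k := by
        gcongr
        exact norm_iteratedFDeriv_cexp_I_mul_le ℓ k x
    _ ≤ ‖c‖ * D ^ q := by
        gcongr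
        exact (pow_le_pow_left₀ (norm_nonneg ℓ) hℓ k).trans (pow_le_pow_right₀ hD hk)

/-- The linear functional `x ↦ n · x` attached to a frequency `n`. -/
def freq (n : Zd d) : Vec d →L[ℝ] ℝ := ∑ i, (n i : ℝ) • ContinuousLinearMap.proj i

lemma freq_apply (n : Zd d) (x : Vec d) : freq n x = ∑ i, (n i : ℝ) * x i := by
  simp [freq]

lemma norm_freq_le (n : Zd d) : ‖freq n‖ ≤ d * jb n := by
  refine ContinuousLinearMap.opNorm_le_bound _ (mul_nonneg d.cast_nonneg (jb_pos n).le) fun x => ?_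
  calc ‖freq n x‖ = ‖∑ i, (n i : ℝ) * x i‖ := by rw [freq_apply]
    _ ≤ ∑ _i : Fin d, jb n * ‖x‖ := by
        refine norm_sum_le_of_le _ fun i _ => ?_
        rw [norm_mul, Int.norm_cast_real]
        exact mul_le_mul ((norm_le_pi_norm n i).trans (norm_le_jb n)) (norm_le_pi_norm x i)
          (norm_nonneg _) (jb_pos n).le
    _ = d * jb n * ‖x‖ := by simp [mul_assoc]

lemma exists_tsum_jb_rpow_mul_norm_le {s₀ : ℝ} (hs₀ : (d : ℝ) / 2 < s₀) :
    ∃ A, 0 ≤ A ∧ ∀ (q : ℝ) (c : Seq d), InHsSeq (q + s₀) c →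
      Summable (fun n => jb n ^ q * ‖c n‖) ∧ ∑' n, jb n ^ q * ‖c n‖ ≤ A * hsNorm (q + s₀) c := by
  have hpow (n : Zd d) (r : ℝ) : 0 ≤ jb n ^ r := Real.rpow_nonneg (jb_pos n).le r
  refine ⟨√(∑' n : Zd d, jb n ^ (-(2 * s₀))), Real.sqrt_nonneg _, fun q c hc => ?_⟩
  have hweight (n : Zd d) : (jb n ^ (-s₀)) ^ (2 : ℝ) = jb n ^ (-(2 * s₀)) := by
    rw [← Real.rpow_mul (jb_pos n).le]
    ring_nf
  have hcoeff (n : Zd d) :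
      (jb n ^ (q + s₀) * ‖c n‖) ^ (2 : ℝ) = jb n ^ (2 * (q + s₀)) * ‖c n‖ ^ 2 := by
    rw [Real.mul_rpow (hpow n _) (norm_nonneg _), ← Real.rpow_mul (jb_pos n).le, Real.rpow_two,
      mul_comm (q + s₀)]
  have hprod (n : Zd d) : jb n ^ (-s₀) * (jb n ^ (q + s₀) * ‖c n‖) = jb n ^ q * ‖c n‖ := by
    rw [← mul_assoc, ← Real.rpow_add (jb_pos n)]
    ring_nf
  have hsum : Summable fun n : Zd d => jb n ^ (-(2 * s₀)) := summable_jb_rpow (by linarith)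
  have hcs := Real.summable_and_inner_le_Lp_mul_Lq_tsum_of_nonneg Real.HolderConjugate.two_two
    (f := fun n : Zd d => jb n ^ (-s₀)) (g := fun n => jb n ^ (q + s₀) * ‖c n‖)
    (fun n => hpow n _) (fun n => mul_nonneg (hpow n _) (norm_nonneg _))
    (by simpa only [hweight] using hsum) (by simpa only [hcoeff, InHsSeq] using hc)
  simpa only [hweight, hcoeff, hprod, ← Real.sqrt_eq_rpow, hsNorm, hsNormSq] using hcs

lemma exists_hasCkBound_of_inHs {s₀ : ℝ} (hs₀ : (d : ℝ) / 2 < s₀) (q : ℕ) :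
    ∃ A, 0 ≤ A ∧ ∀ u : Fn d, InHs (q + s₀) u → HasCkBound q (A * sobNorm (q + s₀) u) u := by
  obtain ⟨A, hA, hcs⟩ := exists_tsum_jb_rpow_mul_norm_le hs₀
  let κ : ℝ := (2 * π) ^ (-(d : ℝ) / 2)
  have hκ : 0 ≤ κ := Real.rpow_nonneg Real.two_pi_pos.le _
  refine ⟨κ * (d + 1) ^ q * A, by positivity, fun u hu => ?_⟩
  obtain ⟨-, hcoeff, hseries⟩ := hu
  obtain ⟨hsum, hle⟩ := hcs q _ hcoeff
  simp only [Real.rpow_natCast] at hsum hle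
  have hmode (n : Zd d) : HasCkBound q (κ * (d + 1) ^ q * (jb n ^ q * ‖fCoeff u n‖))
      fun x => κ * fCoeff u n * cexp (I * freq n x) := by
    have h1 : 1 ≤ (d + 1) * jb n :=
      one_le_mul_of_one_le_of_one_le (le_add_of_nonneg_left d.cast_nonneg) (one_le_jb n)
    have hfreq : ‖freq n‖ ≤ (d + 1) * jb n :=
      (norm_freq_le n).trans (mul_le_mul_of_nonneg_right (le_add_of_nonneg_right zero_le_one)
        (jb_pos n).le)
    convert hasCkBound_const_mul_cexp h1 hfreq q (κ * fCoeff u n) using 1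
    rw [norm_mul, norm_real, Real.norm_of_nonneg hκ, mul_pow]
    ring
  have hu : u = fun x => ∑' n : Zd d, κ * fCoeff u n * cexp (I * freq n x) :=
    funext fun x => by simpa only [freq_apply] using (hseries x).tsum_eq.symm
  have hbound := HasCkBound.tsum (hsum.mul_left (κ * (d + 1) ^ q)) hmode
  rw [← hu, tsum_mul_left] at hbound
  refine hbound.mono ?_
  rw [mul_assoc _ A]
  gcongr
  exact hle

/-- The contribution `z ↦ (z, 0)` of the value of a function to its `1`-jet. -/
def jetOfValue (d : ℕ) : ℂ →L[ℝ] (Fin (d + 1) → ℂ) :=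
  ContinuousLinearMap.pi (Fin.cons (.id ℝ ℂ) 0)

/-- The contribution `ℓ ↦ (0, ℓ e₁, …, ℓ e_d)` of the derivative of a function to its `1`-jet. -/
def jetOfFDeriv (d : ℕ) : (Vec d →L[ℝ] ℂ) →L[ℝ] (Fin (d + 1) → ℂ) :=
  ContinuousLinearMap.pi (Fin.cons 0 fun j => .apply ℝ ℂ (Pi.single j 1))

lemma jet_eq_add (u : Fn d) : jet u = jetOfValue d ∘ u + jetOfFDeriv d ∘ fderiv ℝ u := by
  ext x i
  cases i using Fin.cases <;> simp [jet, jetOfValue, jetOfFDeriv, pdF]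

lemma exists_hasCkBound_jet {s₀ : ℝ} (hs₀ : (d : ℝ) / 2 < s₀) (p : ℕ) :
    ∃ A, 0 ≤ A ∧ ∀ u : Fn d, InHs (p + s₀ + 1) u →
      HasCkBound p (A * sobNorm (p + s₀ + 1) u) (jet u) := by
  obtain ⟨A, hA, hembed⟩ := exists_hasCkBound_of_inHs hs₀ (p + 1)
  have hidx : ((p + 1 : ℕ) : ℝ) + s₀ = p + s₀ + 1 := by
    push_cast
    ring
  rw [hidx] at hembed
  refine ⟨(‖jetOfValue d‖ + ‖jetOfFDeriv d‖) * A, by positivity, fun u hu => ?_⟩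
  have hu := hembed u hu
  rw [jet_eq_add, mul_assoc, add_mul]
  exact ((hu.of_le p.le_succ).clm_comp _).add (hu.fderiv.clm_comp _)

/-! ### Symbols with separated variables -/

/-- Iterated partial derivative along a list of coordinate directions, the counterpart of `mderiv`
for functions of one variable. -/
def pdList (L : List (Fin d)) (g : Fn d) : Fn d := L.foldr pdF g

lemma pdList_eq_iteratedFDeriv (L : List (Fin d)) {g : Fn d} (hg : ContDiff ℝ L.length g) :
    pdList L g = fun x => iteratedFDeriv ℝ L.length g x fun i => Pi.single (L.get i) 1 := by
  induction L with
  | nil => simp [pdList]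
  | cons j L ih =>
    have hlt : (L.length : WithTop ℕ∞) < (j :: L).length := mod_cast L.length.lt_succ_self
    ext x
    calc pdList (j :: L) g x = fderiv ℝ (pdList L g) x (Pi.single j 1) := rfl
      _ = fderiv ℝ (iteratedFDeriv ℝ L.length g) x (Pi.single j 1)
            fun i => Pi.single (L.get i) 1 := by
          rw [ih (hg.of_le hlt.le),
            fderiv_continuousMultilinear_apply_const_apply (hg.differentiable_iteratedFDeriv hlt x)]
      _ = _ := (iteratedFDeriv_succ_apply_left (𝕜 := ℝ) (f := g) (x := x)
          fun i => Pi.single ((j :: L).get i) 1).symm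

lemma norm_pdList_le (L : List (Fin d)) {g : Fn d} (hg : ContDiff ℝ L.length g) (x : Vec d) :
    ‖pdList L g x‖ ≤ ‖iteratedFDeriv ℝ L.length g x‖ := by
  rw [pdList_eq_iteratedFDeriv L hg]
  refine (ContinuousMultilinearMap.le_opNorm _ _).trans_eq ?_
  simp [Pi.norm_single]

lemma differentiable_pdList (L : List (Fin d)) {g : Fn d} (hg : ContDiff ℝ (L.length + 1) g) :
    Differentiable ℝ (pdList L g) := by
  rw [pdList_eq_iteratedFDeriv L (hg.of_le le_self_add)]
  exact fun x => ((hg.differentiable_iteratedFDeriv (mod_cast L.length.lt_succ_self)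
    x).hasFDerivAt.continuousMultilinear_apply_const _).differentiableAt

/-- The `x`-directions of a list of directions of mixed derivatives. -/
def xDirs (L : List (Fin d ⊕ Fin d)) : List (Fin d) := L.filterMap Sum.getLeft?

/-- The `ξ`-directions of a list of directions of mixed derivatives. -/
def ξDirs (L : List (Fin d ⊕ Fin d)) : List (Fin d) := L.filterMap Sum.getRight?

lemma length_xDirs_le (L : List (Fin d ⊕ Fin d)) : (xDirs L).length ≤ L.length :=
  List.length_filterMap_le _ _

lemma length_ξDirs_le (L : List (Fin d ⊕ Fin d)) : (ξDirs L).length ≤ L.length :=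
  List.length_filterMap_le _ _

lemma length_ξDirs (L : List (Fin d ⊕ Fin d)) : (ξDirs L).length = nXi L := by
  induction L with
  | nil => rfl
  | cons k L ih =>
    cases k with
    | inl j => exact ih
    | inr j => exact congrArg Nat.succ ih

lemma mderiv_sum_mul {ι : Type*} [Fintype ι] {Q g : ι → Fn d} (L : List (Fin d ⊕ Fin d))
    (hQ : ∀ i, ContDiff ℝ L.length (Q i)) (hg : ∀ i, ContDiff ℝ L.length (g i)) :
    mderiv L (fun x ξ => ∑ i, Q i ξ * g i x) =
      fun x ξ => ∑ i, pdList (ξDirs L) (Q i) ξ * pdList (xDirs L) (g i) x := by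
  induction L with
  | nil => rfl
  | cons k L ih =>
    have hlen : (L.length : WithTop ℕ∞) ≤ (k :: L).length := mod_cast L.length.le_succ
    have hdir {l : List (Fin d)} (hl : l.length ≤ L.length) :
        (l.length + 1 : WithTop ℕ∞) ≤ (k :: L).length := mod_cast Nat.succ_le_succ hl
    have ih := ih (fun i => (hQ i).of_le hlen) fun i => (hg i).of_le hlen
    ext x ξ
    cases k with
    | inl j =>
      have hdiff (i : ι) : DifferentiableAt ℝ (pdList (xDirs L) (g i)) x :=
        differentiable_pdList _ ((hg i).of_le (hdir (length_xDirs_le L))) x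
      change pdx j (mderiv L _) x ξ =
        ∑ i, pdList (ξDirs L) (Q i) ξ * pdF j (pdList (xDirs L) (g i)) x
      rw [ih, pdx, fderiv_fun_sum fun i _ => (hdiff i).const_mul _]
      simp [fderiv_const_mul (hdiff _), pdF]
    | inr j =>
      have hdiff (i : ι) : DifferentiableAt ℝ (pdList (ξDirs L) (Q i)) ξ :=
        differentiable_pdList _ ((hQ i).of_le (hdir (length_ξDirs_le L))) ξ
      change pdxi j (mderiv L _) x ξ =
        ∑ i, pdF j (pdList (ξDirs L) (Q i)) ξ * pdList (xDirs L) (g i) x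
      rw [ih, pdxi, fderiv_fun_sum fun i _ => (hdiff i).mul_const _]
      simp only [fderiv_mul_const (hdiff _), _root_.sum_apply, smul_apply, smul_eq_mul, pdF]
      exact Finset.sum_congr rfl fun i _ => mul_comm _ _

/-- `Q` is an `x`-independent symbol of order `m`, with symbol bounds of constant `K` on its
derivatives of order at most `p`. -/
structure HasMultiplierBound (p : ℕ) (m K : ℝ) (Q : Fn d) : Prop where
  contDiff : ContDiff ℝ p Q
  norm_iteratedFDeriv_le : ∀ k ≤ p, ∀ ξ, ‖iteratedFDeriv ℝ k Q ξ‖ ≤ K * jbR ξ ^ (m - k)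

namespace HasMultiplierBound

variable {p : ℕ} {m m' K K' : ℝ} {Q Q' : Fn d}

lemma nonneg (hQ : HasMultiplierBound p m K Q) : 0 ≤ K :=
  nonneg_of_mul_nonneg_left ((norm_nonneg _).trans (hQ.norm_iteratedFDeriv_le 0 p.zero_le 0))
    (Real.rpow_pos_of_pos (jbR_pos 0) _)

lemma mul (hQ : HasMultiplierBound p m K Q) (hQ' : HasMultiplierBound p m' K' Q') :
    HasMultiplierBound p (m + m') (2 ^ p * (K * K')) fun ξ => Q ξ * Q' ξ := by
  refine ⟨hQ.contDiff.mul hQ'.contDiff, fun k hk ξ => ?_⟩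
  have hjb := jbR_pos ξ
  have hK := hQ.nonneg
  have hK' := hQ'.nonneg
  calc ‖iteratedFDeriv ℝ k (fun ξ => Q ξ * Q' ξ) ξ‖
      ≤ ∑ i ∈ Finset.range (k + 1), (k.choose i : ℝ) * ‖iteratedFDeriv ℝ i Q ξ‖ *
          ‖iteratedFDeriv ℝ (k - i) Q' ξ‖ :=
        norm_iteratedFDeriv_mul_le hQ.contDiff hQ'.contDiff ξ (mod_cast hk)
    _ ≤ ∑ i ∈ Finset.range (k + 1), (k.choose i : ℝ) * (K * K' * jbR ξ ^ (m + m' - k)) := by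
        refine Finset.sum_le_sum fun i hi => ?_
        have hik : i ≤ k := Finset.mem_range_succ_iff.1 hi
        have hexp : K * jbR ξ ^ (m - i) * (K' * jbR ξ ^ (m' - (k - i : ℕ))) =
            K * K' * jbR ξ ^ (m + m' - k) := by
          rw [mul_mul_mul_comm, ← Real.rpow_add hjb, Nat.cast_sub hik]
          ring_nf
        rw [mul_assoc, ← hexp]
        gcongr
        · exact hQ.norm_iteratedFDeriv_le i (hik.trans hk) ξ
        · exact hQ'.norm_iteratedFDeriv_le (k - i) ((Nat.sub_le k i).trans hk) ξ
    _ = 2 ^ k * (K * K' * jbR ξ ^ (m + m' - k)) := by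
        rw [← Finset.sum_mul, ← Nat.cast_sum, Nat.sum_range_choose]
        norm_cast
    _ ≤ 2 ^ p * (K * K') * jbR ξ ^ (m + m' - k) := by
        rw [mul_assoc (2 ^ p)]
        gcongr
        exact one_le_two

lemma norm_pdList_mul_le (hQ : HasMultiplierBound p m K Q) {L : List (Fin d)} (hL : L.length ≤ p)
    (ξ : Vec d) : jbR ξ ^ (-m + L.length) * ‖pdList L Q ξ‖ ≤ K := by
  have hpos : 0 < jbR ξ ^ (m - L.length) := Real.rpow_pos_of_pos (jbR_pos ξ) _
  calc jbR ξ ^ (-m + L.length) * ‖pdList L Q ξ‖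
      = (jbR ξ ^ (m - L.length))⁻¹ * ‖pdList L Q ξ‖ := by
        rw [← Real.rpow_neg (jbR_pos ξ).le, neg_sub, neg_add_eq_sub]
    _ ≤ K := by
        rw [inv_mul_le_iff₀ hpos, mul_comm]
        exact (norm_pdList_le L (hQ.contDiff.of_le (mod_cast hL)) ξ).trans
          (hQ.norm_iteratedFDeriv_le _ hL ξ)

end HasMultiplierBound

lemma hasMultiplierBound_clm (p : ℕ) {Λ : Vec d →L[ℝ] ℂ} (hΛ : ‖Λ‖ ≤ 1) :
    HasMultiplierBound p 1 1 Λ := by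
  refine ⟨Λ.contDiff, fun k _ ξ => ?_⟩
  have hfderiv : fderiv ℝ Λ = fun _ => Λ := funext fun _ => Λ.fderiv
  match k with
  | 0 => simpa using (Λ.le_of_opNorm_le hΛ ξ).trans (by simpa using norm_le_jbR ξ)
  | 1 => simpa [norm_iteratedFDeriv_one] using hΛ
  | k + 2 =>
    rw [← norm_iteratedFDeriv_fderiv, hfderiv, iteratedFDeriv_succ_const]
    simpa using Real.rpow_nonneg (jbR_pos ξ).le _

lemma hasMultiplierBound_coord (p : ℕ) (j : Fin d) :
    HasMultiplierBound p 1 1 fun ξ : Vec d => (ξ j : ℂ) :=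
  hasMultiplierBound_clm p (Λ := ofRealCLM.comp (ContinuousLinearMap.proj j)) <|
    ContinuousLinearMap.opNorm_le_bound _ zero_le_one fun ξ => by simpa using norm_le_pi_norm ξ j

lemma hasMultiplierBound_coord_mul_coord (p : ℕ) (j k : Fin d) :
    HasMultiplierBound p 2 (2 ^ p) fun ξ : Vec d => ((ξ j * ξ k : ℝ) : ℂ) := by
  simpa [one_add_one_eq_two] using (hasMultiplierBound_coord p j).mul (hasMultiplierBound_coord p k)

lemma symNorm_sum_mul_le {ι : Type*} [Fintype ι] {p : ℕ} {m : ℝ} {K M : ι → ℝ} {Q g : ι → Fn d}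
    (hQ : ∀ i, HasMultiplierBound p m (K i) (Q i)) (hg : ∀ i, HasCkBound p (M i) (g i)) :
    symNorm m p (fun x ξ => ∑ i, Q i ξ * g i x) ≤ ∑ i, K i * M i := by
  refine Real.sSup_le ?_ (Finset.sum_nonneg fun i _ => mul_nonneg (hQ i).nonneg (hg i).nonneg)
  rintro r ⟨L, x, ξ, hL, rfl⟩
  have hLp : (L.length : WithTop ℕ∞) ≤ p := mod_cast hL
  have hx : (xDirs L).length ≤ p := (length_xDirs_le L).trans hL
  rw [mderiv_sum_mul L (fun i => (hQ i).contDiff.of_le hLp) fun i => (hg i).contDiff.of_le hLp,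
    ← length_ξDirs]
  have hjb := Real.rpow_nonneg (jbR_pos ξ).le (-m + (ξDirs L).length)
  calc jbR ξ ^ (-m + ((ξDirs L).length : ℝ)) *
        ‖∑ i, pdList (ξDirs L) (Q i) ξ * pdList (xDirs L) (g i) x‖
      ≤ jbR ξ ^ (-m + ((ξDirs L).length : ℝ)) *
        ∑ i, ‖pdList (ξDirs L) (Q i) ξ‖ * ‖pdList (xDirs L) (g i) x‖ := by
        gcongr
        exact norm_sum_le_of_le _ fun i _ => norm_mul_le _ _
    _ = ∑ i, jbR ξ ^ (-m + ((ξDirs L).length : ℝ)) * ‖pdList (ξDirs L) (Q i) ξ‖ *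
        ‖pdList (xDirs L) (g i) x‖ := by simp only [Finset.mul_sum, mul_assoc]
    _ ≤ ∑ i, K i * M i := by
        refine Finset.sum_le_sum fun i _ => mul_le_mul ?_ ?_ (norm_nonneg _) (hQ i).nonneg
        · exact (hQ i).norm_pdList_mul_le ((length_ξDirs_le L).trans hL) ξ
        · exact (norm_pdList_le _ ((hg i).contDiff.of_le (mod_cast hx)) x).trans
            ((hg i).norm_iteratedFDeriv_le _ hx x)

/-! ### Constants depending on the Sobolev norm -/

lemma GoodConst.add {C C' : ℝ → ℝ} (hC : GoodConst C) (hC' : GoodConst C') : GoodConst (C + C') :=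
  ⟨hC.1.add hC'.1, fun x => add_pos (hC.2 x) (hC'.2 x)⟩

lemma exists_goodConst_of_forall_le {α : Type*} {P : α → Prop} {N S : α → ℝ}
    (hN : ∀ a, 0 ≤ N a)
    (h : ∀ R, ∃ K, 0 ≤ K ∧ ∀ a, P a → N a ≤ R → S a ≤ K * N a) :
    ∃ C, GoodConst C ∧ ∀ a, P a → S a ≤ C (N a) * N a := by
  choose K hK0 hK using fun n : ℕ => h n
  let T (n : ℕ) : ℝ := ∑ i ∈ Finset.range (n + 1), K i
  have hT : Monotone T := fun m n hmn =>
    Finset.sum_le_sum_of_subset_of_nonneg (Finset.range_mono (Nat.succ_le_succ hmn))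
      fun i _ _ => hK0 i
  have hKT (n : ℕ) : K n ≤ T n :=
    Finset.single_le_sum (fun i _ => hK0 i) (Finset.self_mem_range_succ n)
  refine ⟨fun x => 1 + T ⌈x⌉₊, ⟨fun x y hxy => ?_, fun x => ?_⟩, fun a ha => ?_⟩
  · exact add_le_add_right (hT (Nat.ceil_mono hxy)) 1
  · exact add_pos_of_pos_of_nonneg one_pos ((hK0 _).trans (hKT _))
  · refine (hK _ a ha (Nat.le_ceil _)).trans (mul_le_mul_of_nonneg_right ?_ (hN a))
    exact (hKT _).trans (le_add_of_nonneg_left zero_le_one)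

lemma sobNorm_nonneg (s : ℝ) (u : Fn d) : 0 ≤ sobNorm s u :=
  Real.sqrt_nonneg _

lemma exists_goodConst_symNorm_sum_mul_jet_le {ι : Type*} [Fintype ι] {s₀ : ℝ}
    (hs₀ : (d : ℝ) / 2 < s₀) {p : ℕ} {m : ℝ} {K : ι → ℝ} {Q : ι → Fn d}
    {G : ι → (Fin (d + 1) → ℂ) → ℂ} (hQ : ∀ i, HasMultiplierBound p m (K i) (Q i))
    (hG : ∀ i, ContDiff ℝ (p + 1) (G i)) (hG0 : ∀ i, G i 0 = 0) :
    ∃ C, GoodConst C ∧ ∀ u : Fn d, InHs (p + s₀ + 1) u →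
      symNorm m p (fun x ξ => ∑ i, Q i ξ * G i (jet u x)) ≤
        C (sobNorm (p + s₀ + 1) u) * sobNorm (p + s₀ + 1) u := by
  refine exists_goodConst_of_forall_le (sobNorm_nonneg _) fun R => ?_
  obtain ⟨A, hA, hjet⟩ := exists_hasCkBound_jet hs₀ p
  choose B hB0 hB using fun i => exists_hasCkBound_comp_mul (E := Vec d) (hG i) (hG0 i) (A * R)
  refine ⟨∑ i, K i * (B i * A), Finset.sum_nonneg fun i _ =>
    mul_nonneg (hQ i).nonneg (mul_nonneg (hB0 i) hA), fun u hu huR => ?_⟩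
  have hcomp (i : ι) := hB i _ (mul_le_mul_of_nonneg_left huR hA) _ (hjet u hu)
  refine (symNorm_sum_mul_le hQ hcomp).trans_eq ?_
  simp only [Finset.sum_mul, mul_assoc]

/-! ### Wirtinger derivatives -/

open scoped ComplexConjugate

section Wirtinger

variable {n : ℕ} {G : (Fin n → ℂ) → ℂ}

/-- The functional `ℓ ↦ (ℓ e_j + σ i ℓ (i e_j)) / 2` reading the Wirtinger derivative off the real
Fréchet derivative `ℓ`. -/
def wirtingerCLM (σ : ℝ) (j : Fin n) : ((Fin n → ℂ) →L[ℝ] ℂ) →L[ℝ] ℂ :=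
  (1 / 2 : ℂ) • (.apply ℝ ℂ (Pi.single j 1) + (σ * I) • .apply ℝ ℂ (Pi.single j I))

lemma wirtingerCLM_apply (σ : ℝ) (j : Fin n) (ℓ : (Fin n → ℂ) →L[ℝ] ℂ) :
    wirtingerCLM σ j ℓ = (ℓ (Pi.single j 1) + σ * I * ℓ (Pi.single j I)) / 2 := by
  simp only [wirtingerCLM, smul_apply, add_apply, ContinuousLinearMap.apply_apply, smul_eq_mul]
  ring

/-- The Wirtinger derivative `(∂_{Re y_j} + σ i ∂_{Im y_j}) / 2`; the sign `σ = -1` gives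
`∂_{y_j}` and `σ = 1` gives `∂_{ȳ_j}`, so that both are treated at once. -/
def wirtingerDeriv (σ : ℝ) (j : Fin n) (G : (Fin n → ℂ) → ℂ) : (Fin n → ℂ) → ℂ :=
  wirtingerCLM σ j ∘ fderiv ℝ G

lemma wdP_eq_wirtingerDeriv (j : Fin n) : wdP j = wirtingerDeriv (-1) j := by
  ext G y
  simp [wdP, wirtingerDeriv, wirtingerCLM_apply, sub_eq_add_neg]

lemma wdM_eq_wirtingerDeriv (j : Fin n) : wdM j = wirtingerDeriv 1 j := by
  ext G y
  simp [wdM, wirtingerDeriv, wirtingerCLM_apply]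

lemma contDiff_wirtingerDeriv {k : ℕ} (hG : ContDiff ℝ (k + 1) G) (σ : ℝ) (j : Fin n) :
    ContDiff ℝ k (wirtingerDeriv σ j G) :=
  (wirtingerCLM σ j).contDiff.comp (hG.fderiv_right le_rfl)

lemma contDiff_wirtingerDeriv_wirtingerDeriv {k : ℕ} (hG : ContDiff ℝ (k + 2) G) (σ τ : ℝ)
    (i j : Fin n) : ContDiff ℝ k (wirtingerDeriv σ i (wirtingerDeriv τ j G)) :=
  contDiff_wirtingerDeriv (contDiff_wirtingerDeriv (k := k + 1)
    (by simpa [add_assoc, one_add_one_eq_two] using hG) τ j) σ i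

lemma wirtingerDeriv_wirtingerDeriv (hG : ContDiff ℝ 2 G) (σ τ : ℝ) (i j : Fin n)
    (y : Fin n → ℂ) : wirtingerDeriv σ i (wirtingerDeriv τ j G) y =
      wirtingerCLM σ i ((wirtingerCLM τ j).comp (fderiv ℝ (fderiv ℝ G) y)) := by
  have hdiff : Differentiable ℝ (fderiv ℝ G) :=
    (hG.fderiv_right (m := 1) le_rfl).differentiable one_ne_zero
  rw [wirtingerDeriv, Function.comp_apply, wirtingerDeriv]
  exact congrArg _ ((wirtingerCLM τ j).hasFDerivAt.comp y (hdiff y).hasFDerivAt).fderiv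

lemma wirtingerDeriv_comm (hG : ContDiff ℝ 2 G) (σ τ : ℝ) (i j : Fin n) :
    wirtingerDeriv σ i (wirtingerDeriv τ j G) = wirtingerDeriv τ j (wirtingerDeriv σ i G) := by
  ext y
  have hsymm : IsSymmSndFDerivAt ℝ G y :=
    hG.contDiffAt.isSymmSndFDerivAt (by simp [minSmoothness_of_isRCLikeNormedField])
  simp only [wirtingerDeriv_wirtingerDeriv hG, wirtingerCLM_apply,
    ContinuousLinearMap.comp_apply, hsymm.eq (Pi.single i _) (Pi.single j _)]
  ring

lemma wirtingerDeriv_wirtingerDeriv_zero (hG : ContDiff ℝ 2 G)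
    (hG2 : iteratedFDeriv ℝ 2 G 0 = 0) (σ τ : ℝ) (i j : Fin n) :
    wirtingerDeriv σ i (wirtingerDeriv τ j G) 0 = 0 := by
  have hzero : fderiv ℝ (fderiv ℝ G) 0 = 0 := by
    ext v w
    simpa [hG2] using (iteratedFDeriv_two_apply (𝕜 := ℝ) G 0 ![v, w]).symm
  rw [wirtingerDeriv_wirtingerDeriv hG, hzero, ContinuousLinearMap.comp_zero, map_zero]

lemma conj_wirtingerDeriv (σ : ℝ) (j : Fin n) (G : (Fin n → ℂ) → ℂ) (y : Fin n → ℂ) :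
    conj (wirtingerDeriv σ j G y) = wirtingerDeriv (-σ) j (fun z => conj (G z)) y := by
  have hfderiv (v : Fin n → ℂ) :
      conj (fderiv ℝ G y v) = fderiv ℝ (fun z => conj (G z)) y v := by
    simpa [Function.comp_def] using congrArg (· v) (conjCLE.comp_fderiv (f := G) (x := y)).symm
  simp only [wirtingerDeriv, Function.comp_apply, wirtingerCLM_apply, ← hfderiv, map_div₀, map_add,
    map_mul, conj_ofReal, conj_I, map_ofNat]
  push_cast
  ring

lemma conj_wirtingerDeriv_wirtingerDeriv (hG : ∀ y, (G y).im = 0) (σ τ : ℝ) (i j : Fin n)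
    (y : Fin n → ℂ) : conj (wirtingerDeriv σ i (wirtingerDeriv τ j G) y) =
      wirtingerDeriv (-σ) i (wirtingerDeriv (-τ) j G) y := by
  have hreal : (fun y => conj (G y)) = G := funext fun y => conj_eq_iff_im.2 (hG y)
  simp only [conj_wirtingerDeriv, hreal]

end Wirtinger

/-! ### The symbols of the quasilinear equation -/

section Symbols

lemma a1sym_neg (F : (Fin (d + 1) → ℂ) → ℂ) (u : Fn d) (x ξ : Vec d) :
    a1sym F u x (-ξ) = -a1sym F u x ξ := by
  simp [a1sym]

lemma a2sym_neg (F : (Fin (d + 1) → ℂ) → ℂ) (u : Fn d) (x ξ : Vec d) :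
    a2sym F u x (-ξ) = a2sym F u x ξ := by
  simp [a2sym]

variable {F : (Fin (d + 1) → ℂ) → ℂ} {s₀ : ℝ} {p : ℕ}

lemma conj_a2sym (hF : ContDiff ℝ 2 F) (hFim : ∀ y, (F y).im = 0) (u : Fn d) (x ξ : Vec d) :
    conj (a2sym F u x ξ) = a2sym F u x ξ := by
  simp only [a2sym, wdP_eq_wirtingerDeriv, wdM_eq_wirtingerDeriv, map_sum, map_mul, conj_ofReal,
    conj_wirtingerDeriv_wirtingerDeriv hFim, neg_neg]
  rw [Finset.sum_comm]
  refine Finset.sum_congr rfl fun j _ => Finset.sum_congr rfl fun k _ => ?_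
  rw [wirtingerDeriv_comm hF, mul_comm (ξ k)]

lemma conj_a1sym (hFim : ∀ y, (F y).im = 0) (u : Fn d) (x ξ : Vec d) :
    conj (a1sym F u x ξ) = a1sym F u x ξ := by
  simp only [a1sym, wdP_eq_wirtingerDeriv, wdM_eq_wirtingerDeriv, map_sum, map_mul, map_sub,
    map_div₀, conj_I, map_ofNat, conj_ofReal, conj_wirtingerDeriv_wirtingerDeriv hFim, neg_neg,
    Finset.mul_sum]
  refine Finset.sum_congr rfl fun j _ => ?_
  ring

lemma exists_goodConst_symNorm_wirtingerDeriv_le (hF : ContDiff ℝ (p + 3) F)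
    (hF2 : iteratedFDeriv ℝ 2 F 0 = 0) (hs₀ : (d : ℝ) / 2 < s₀) (σ τ : ℝ) :
    ∃ C, GoodConst C ∧ ∀ u : Fn d, InHs (p + s₀ + 1) u →
      symNorm 2 p (fun x ξ => ∑ j : Fin d, ∑ k : Fin d, ((ξ j * ξ k : ℝ) : ℂ) *
        wirtingerDeriv σ j.succ (wirtingerDeriv τ k.succ F) (jet u x)) ≤
        C (sobNorm (p + s₀ + 1) u) * sobNorm (p + s₀ + 1) u := by
  have hF' : ContDiff ℝ ((p + 1 : ℕ) + 2) F := hF.of_le (by norm_cast)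
  have hF'' : ContDiff ℝ 2 F := hF.of_le (by norm_cast; lia)
  simpa only [Fintype.sum_prod_type] using
    exists_goodConst_symNorm_sum_mul_jet_le (ι := Fin d × Fin d) hs₀
      (fun i => hasMultiplierBound_coord_mul_coord p i.1 i.2)
      (fun i => contDiff_wirtingerDeriv_wirtingerDeriv hF' σ τ i.1.succ i.2.succ)
      fun i => wirtingerDeriv_wirtingerDeriv_zero hF'' hF2 σ τ i.1.succ i.2.succ

lemma exists_goodConst_symNorm_a2sym_le (hF : ContDiff ℝ (p + 3) F)
    (hF2 : iteratedFDeriv ℝ 2 F 0 = 0) (hs₀ : (d : ℝ) / 2 < s₀) :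
    ∃ C, GoodConst C ∧ ∀ u : Fn d, InHs (p + s₀ + 1) u →
      symNorm 2 p (a2sym F u) ≤ C (sobNorm (p + s₀ + 1) u) * sobNorm (p + s₀ + 1) u := by
  unfold a2sym
  simpa only [wdP_eq_wirtingerDeriv, wdM_eq_wirtingerDeriv] using
    exists_goodConst_symNorm_wirtingerDeriv_le hF hF2 hs₀ (-1) 1

lemma exists_goodConst_symNorm_b2sym_le (hF : ContDiff ℝ (p + 3) F)
    (hF2 : iteratedFDeriv ℝ 2 F 0 = 0) (hs₀ : (d : ℝ) / 2 < s₀) :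
    ∃ C, GoodConst C ∧ ∀ u : Fn d, InHs (p + s₀ + 1) u →
      symNorm 2 p (b2sym F u) ≤ C (sobNorm (p + s₀ + 1) u) * sobNorm (p + s₀ + 1) u := by
  unfold b2sym
  simpa only [wdM_eq_wirtingerDeriv] using
    exists_goodConst_symNorm_wirtingerDeriv_le hF hF2 hs₀ 1 1

lemma exists_goodConst_symNorm_a1sym_le (hF : ContDiff ℝ (p + 3) F)
    (hF2 : iteratedFDeriv ℝ 2 F 0 = 0) (hs₀ : (d : ℝ) / 2 < s₀) :
    ∃ C, GoodConst C ∧ ∀ u : Fn d, InHs (p + s₀ + 1) u →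
      symNorm 1 p (a1sym F u) ≤ C (sobNorm (p + s₀ + 1) u) * sobNorm (p + s₀ + 1) u := by
  have hF' : ContDiff ℝ ((p + 1 : ℕ) + 2) F := hF.of_le (by norm_cast)
  have hF'' : ContDiff ℝ 2 F := hF.of_le (by norm_cast; lia)
  let G (j : Fin d) (y : Fin (d + 1) → ℂ) : ℂ :=
    I / 2 * (wirtingerDeriv 1 0 (wirtingerDeriv (-1) j.succ F) y -
      wirtingerDeriv (-1) 0 (wirtingerDeriv 1 j.succ F) y)
  have hG (j : Fin d) : ContDiff ℝ (p + 1) (G j) :=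
    contDiff_const.mul ((contDiff_wirtingerDeriv_wirtingerDeriv hF' 1 (-1) 0 j.succ).sub
      (contDiff_wirtingerDeriv_wirtingerDeriv hF' (-1) 1 0 j.succ))
  have hG0 (j : Fin d) : G j 0 = 0 := by
    simp only [G, wirtingerDeriv_wirtingerDeriv_zero hF'' hF2, sub_zero, mul_zero]
  have ha1 (u : Fn d) : a1sym F u = fun x ξ => ∑ j, (ξ j : ℂ) * G j (jet u x) := by
    ext x ξ
    simp only [a1sym, wdP_eq_wirtingerDeriv, wdM_eq_wirtingerDeriv, Finset.mul_sum, G]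
    exact Finset.sum_congr rfl fun j _ => by ring
  simpa only [ha1] using
    exists_goodConst_symNorm_sum_mul_jet_le hs₀ (hasMultiplierBound_coord p) hG hG0

end Symbols

theorem statement_11_general {F : (Fin (d + 1) → ℂ) → ℂ} {s₀ : ℝ} {p : ℕ}
    (hF : ContDiff ℝ (p + 3) F) (hFim : ∀ y, (F y).im = 0) (hF2 : iteratedFDeriv ℝ 2 F 0 = 0)
    (hs₀ : (d : ℝ) / 2 < s₀) :
    (∀ (u : Fn d) (x ξ : Vec d),
        conj (a2sym F u x ξ) = a2sym F u x ξ ∧ conj (a1sym F u x ξ) = a1sym F u x ξ ∧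
        a1sym F u x (-ξ) = -a1sym F u x ξ ∧ a2sym F u x (-ξ) = a2sym F u x ξ) ∧
    ∃ C : ℝ → ℝ, GoodConst C ∧ ∀ u : Fn d, InHs (p + s₀ + 1) u →
      symNorm 2 p (a2sym F u) + symNorm 2 p (b2sym F u) + symNorm 1 p (a1sym F u)
        ≤ C (sobNorm (p + s₀ + 1) u) * sobNorm (p + s₀ + 1) u := by
  have hF' : ContDiff ℝ 2 F := hF.of_le (by norm_cast; lia)
  obtain ⟨Ca₂, hCa₂, ha₂⟩ := exists_goodConst_symNorm_a2sym_le hF hF2 hs₀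
  obtain ⟨Cb₂, hCb₂, hb₂⟩ := exists_goodConst_symNorm_b2sym_le hF hF2 hs₀
  obtain ⟨Ca₁, hCa₁, ha₁⟩ := exists_goodConst_symNorm_a1sym_le hF hF2 hs₀
  refine ⟨fun u x ξ => ⟨conj_a2sym hF' hFim u x ξ, conj_a1sym hFim u x ξ, a1sym_neg F u x ξ,
    a2sym_neg F u x ξ⟩, Ca₂ + Cb₂ + Ca₁, (hCa₂.add hCb₂).add hCa₁, fun u hu => ?_⟩
  simp only [Pi.add_apply, add_mul]
  exact add_le_add (add_le_add (ha₂ u hu) (hb₂ u hu)) (ha₁ u hu)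

/-- Lemma 3.2: reality and parity of the symbols `a₂, a₁`, and
seminorm estimates `|a₂|_{𝒩²_p} + |b₂|_{𝒩²_p} + |a₁|_{𝒩¹_p} ≤ C ‖u‖_{H^{p+s₀+1}}`. -/
theorem statement_11 (d : ℕ) (hd : 1 ≤ d) (F : (Fin (d + 1) → ℂ) → ℂ) (hF : GoodF d F)
    (s₀ : ℝ) (hs₀ : (d : ℝ) / 2 < s₀) (p : ℕ) (s : ℝ) (hp : (p : ℝ) + s₀ ≤ s) :
    (∀ (u : Fn d) (x ξ : Vec d),
        (starRingEnd ℂ) (a2sym F u x ξ) = a2sym F u x ξ ∧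
        (starRingEnd ℂ) (a1sym F u x ξ) = a1sym F u x ξ ∧
        a1sym F u x (-ξ) = -a1sym F u x ξ ∧
        a2sym F u x (-ξ) = a2sym F u x ξ) ∧
    ∃ C : ℝ → ℝ, GoodConst C ∧ ∀ u : Fn d, InHs ((p : ℝ) + s₀ + 1) u →
      symNorm 2 p (a2sym F u) + symNorm 2 p (b2sym F u) + symNorm 1 p (a1sym F u)
        ≤ C (sobNorm ((p : ℝ) + s₀ + 1) u) * sobNorm ((p : ℝ) + s₀ + 1) u := by
  exact statement_11_general (mod_cast contDiff_infty.1 hF.1 (p + 3)) hF.2.1 (hF.2.2 2 le_rfl) hs₀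

end QLNLS
end
end

section
/- Assume the global ellipticity hypothesis, so that (1 + ã_{2,R}(x,ξ))² − |b̃_{2,R}(x,ξ)|² > 0 for all (x,ξ) and λ₂ is well defined. Then for every (x,ξ): S^{-1}(x,ξ) · E(𝟙 + Ã_{2,R}(x,ξ)) · S(x,ξ) = [[λ₂(x,ξ), 0],[0, −λ₂(x,ξ)]], and s₁(x,ξ)² − |s₂(x,ξ)|² = 1. -/
open MeasureTheory Complex Real Filter

noncomputable section

namespace QLNLS

variable {d : ℕ}

/-!
Since `F` is real-valued and its Wirtinger derivatives commute, the matrix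
`∂_{y_j} ∂_{ȳ_k} F` is Hermitian, so `a₂` is real. Ellipticity says `|b₂| < |ξ|² + a₂` for `ξ ≠ 0`;
multiplying by `|ξ|⁻² 𝒳_R ∈ [0, |ξ|⁻²]` gives `|b̃| < 1 + ã`, so that `λ₂` and the normalizing
denominator of `S` are positive. The columns of `S` are eigenvectors of `E(𝟙 + Ã)`, that is
`E(𝟙 + Ã) S = S diag(λ₂, -λ₂)`, and `det S = s₁² - |s₂|² = 1`. Hence the adjugate of `S`, which is
the matrix called `S⁻¹`, is its inverse and conjugates `E(𝟙 + Ã)` to `diag(λ₂, -λ₂)`.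
-/

theorem hasFDerivAt_fderiv_apply {𝕜 E F : Type*} [NontriviallyNormedField 𝕜]
    [NormedAddCommGroup E] [NormedSpace 𝕜 E] [NormedAddCommGroup F] [NormedSpace 𝕜 F]
    {f : E → F} {x : E} (hf : DifferentiableAt 𝕜 (fderiv 𝕜 f) x) (w : E) :
    HasFDerivAt (fun z => fderiv 𝕜 f z w) ((fderiv 𝕜 (fderiv 𝕜 f) x).flip w) x := by
  simpa using hf.hasFDerivAt.clm_apply (hasFDerivAt_const w x)

section Wirtinger

open scoped ComplexConjugate

variable {n : ℕ} {G : (Fin n → ℂ) → ℂ} {y : Fin n → ℂ}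

theorem conj_wdP (j : Fin n) (G : (Fin n → ℂ) → ℂ) (y : Fin n → ℂ) :
    conj (wdP j G y) = wdM j (fun z => conj (G z)) y := by
  have hconj : fderiv ℝ (fun z => conj (G z)) y = _ := fderiv_star
  simp [wdP, wdM, hconj, Complex.conj_ofNat]

theorem conj_wdM (j : Fin n) (G : (Fin n → ℂ) → ℂ) (y : Fin n → ℂ) :
    conj (wdM j G y) = wdP j (fun z => conj (G z)) y := by
  have hconj : fderiv ℝ (fun z => conj (G z)) y = _ := fderiv_star
  simp [wdP, wdM, hconj, sub_eq_add_neg, Complex.conj_ofNat]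

theorem fderiv_wdP_apply (hG : DifferentiableAt ℝ (fderiv ℝ G) y) (k : Fin n) (v : Fin n → ℂ) :
    fderiv ℝ (wdP k G) y v =
      (fderiv ℝ (fderiv ℝ G) y v (Pi.single k 1)
        - I * fderiv ℝ (fderiv ℝ G) y v (Pi.single k I)) / 2 := by
  have hwd := ((hasFDerivAt_fderiv_apply hG (Pi.single k 1)).fun_sub
    ((hasFDerivAt_fderiv_apply hG (Pi.single k I)).const_mul I)).mul_const (2⁻¹ : ℂ)
  rw [show wdP k G = _ from funext fun z => div_eq_mul_inv _ _, hwd.fderiv]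
  simp [div_eq_inv_mul]

theorem fderiv_wdM_apply (hG : DifferentiableAt ℝ (fderiv ℝ G) y) (k : Fin n) (v : Fin n → ℂ) :
    fderiv ℝ (wdM k G) y v =
      (fderiv ℝ (fderiv ℝ G) y v (Pi.single k 1)
        + I * fderiv ℝ (fderiv ℝ G) y v (Pi.single k I)) / 2 := by
  have hwd := ((hasFDerivAt_fderiv_apply hG (Pi.single k 1)).fun_add
    ((hasFDerivAt_fderiv_apply hG (Pi.single k I)).const_mul I)).mul_const (2⁻¹ : ℂ)
  rw [show wdM k G = _ from funext fun z => div_eq_mul_inv _ _, hwd.fderiv]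
  simp [div_eq_inv_mul, mul_add]

theorem wdM_wdP_comm (hG : ContDiffAt ℝ 2 G y) (j k : Fin n) :
    wdM j (wdP k G) y = wdP k (wdM j G) y := by
  have hdiff : DifferentiableAt ℝ (fderiv ℝ G) y :=
    (hG.fderiv_right (m := 1) (by norm_num)).differentiableAt one_ne_zero
  have hsymm : IsSymmSndFDerivAt ℝ G y := hG.isSymmSndFDerivAt (by simp)
  rw [wdM, wdP]
  simp only [fderiv_wdP_apply hdiff, fderiv_wdM_apply hdiff, hsymm.eq (Pi.single k _)]
  ring

theorem conj_wdP_wdM_of_real (hG : ContDiffAt ℝ 2 G y) (hreal : ∀ z, (G z).im = 0)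
    (j k : Fin n) : conj (wdP j (wdM k G) y) = wdP k (wdM j G) y := by
  have hconj : (fun z => conj (G z)) = G := funext fun z => conj_eq_iff_im.mpr (hreal z)
  calc conj (wdP j (wdM k G) y) = wdM j (fun z => conj (wdM k G z)) y := conj_wdP ..
    _ = wdM j (wdP k G) y := by simp only [conj_wdM, hconj]
    _ = wdP k (wdM j G) y := wdM_wdP_comm hG j k

end Wirtinger

section SecondOrderSymbols

variable {F : (Fin (d + 1) → ℂ) → ℂ} {u : Fn d} {χ : ℝ → ℝ} {R : ℝ} {x ξ : Vec d}

theorem rnorm_sq (ξ : Vec d) : rnorm ξ ^ 2 = ∑ i, ξ i ^ 2 :=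
  Real.sq_sqrt (Finset.sum_nonneg fun _ _ => sq_nonneg _)

theorem rnorm_pos (hξ : ξ ≠ 0) : 0 < rnorm ξ := by
  simpa [rnorm, EuclideanSpace.norm_eq] using norm_pos_iff.mpr ((WithLp.toLp_eq_zero 2).not.mpr hξ)

theorem a2sym_im (hF : ContDiffAt ℝ 2 F (jet u x)) (hreal : ∀ y, (F y).im = 0) (ξ : Vec d) :
    (a2sym F u x ξ).im = 0 := by
  rw [← conj_eq_iff_im]
  simp only [a2sym, map_sum, map_mul, conj_ofReal, conj_wdP_wdM_of_real hF hreal]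
  rw [Finset.sum_comm]
  simp_rw [mul_comm]

theorem a2til_im (hF : ContDiffAt ℝ 2 F (jet u x)) (hreal : ∀ y, (F y).im = 0) :
    (a2til F u χ R x ξ).im = 0 := by
  rw [a2til, im_ofReal_mul, a2sym_im hF hreal, mul_zero]

theorem b2til_neg : b2til F u χ R x (-ξ) = b2til F u χ R x ξ := by
  simp [b2til, b2sym, cutXR, rnorm]

theorem Elliptic.norm_b2sym_lt (hE : Elliptic d F) (u : Fn d) (x : Vec d) (hξ : ξ ≠ 0) :
    ‖b2sym F u x ξ‖ < rnorm ξ ^ 2 + (a2sym F u x ξ).re := by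
  obtain ⟨c₁, hc₁, c₂, hc₂, hell⟩ := hE
  obtain ⟨hre, hdisc⟩ := hell ξ (jet u x)
  replace hdisc := hdisc hξ
  have hN : 0 < rnorm ξ ^ 2 := pow_pos (rnorm_pos hξ) 2
  have hsplit : (∑ j, ∑ k, ((ξ j * ξ k : ℝ) : ℂ) *
        ((if j = k then 1 else 0) + wdP (Fin.succ j) (wdM (Fin.succ k) F) (jet u x))).re
      = rnorm ξ ^ 2 + (a2sym F u x ξ).re := by
    simp [a2sym, mul_add, Finset.sum_add_distrib, rnorm_sq, pow_two (ξ _)]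
  rw [← rnorm_sq, hsplit] at hre
  rw [← rnorm_sq] at hdisc
  change c₂ ≤ (1 + (a2sym F u x ξ).re / rnorm ξ ^ 2) ^ 2
    - ‖b2sym F u x ξ‖ ^ 2 / (rnorm ξ ^ 2) ^ 2 at hdisc
  have hsq : (‖b2sym F u x ξ‖ / rnorm ξ ^ 2) ^ 2 < (1 + (a2sym F u x ξ).re / rnorm ξ ^ 2) ^ 2 := by
    rw [div_pow]
    linarith
  rw [one_add_div hN.ne', div_pow, div_pow, div_lt_div_iff_of_pos_right (pow_pos hN 2)] at hsq
  exact lt_of_pow_lt_pow_left₀ 2 ((mul_pos hc₁ hN).le.trans hre) hsq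

theorem IsCutoff.cutXR_mem_Icc (hχ : IsCutoff χ) (R : ℝ) (ξ : Vec d) :
    cutXR χ R ξ ∈ Set.Icc (0 : ℝ) 1 :=
  Set.Icc.mem_iff_one_sub_mem.mp (hχ.mem _)

theorem norm_b2til_lt (hχ : cutXR χ R ξ ∈ Set.Icc (0 : ℝ) 1)
    (hb : ξ ≠ 0 → ‖b2sym F u x ξ‖ < rnorm ξ ^ 2 + (a2sym F u x ξ).re) :
    ‖b2til F u χ R x ξ‖ < 1 + (a2til F u χ R x ξ).re := by
  set w : ℝ := (rnorm ξ ^ 2)⁻¹ * cutXR χ R ξ with hw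
  have hw0 : 0 ≤ w := mul_nonneg (by positivity) hχ.1
  have hnorm : ‖b2til F u χ R x ξ‖ = w * ‖b2sym F u x ξ‖ := by
    rw [b2til, norm_mul, norm_real, Real.norm_of_nonneg hw0]
  rw [hnorm, a2til, re_ofReal_mul, ← hw]
  rcases hw0.eq_or_lt with hw0 | hw0
  · simp [← hw0]
  have hξ : ξ ≠ 0 := by
    rintro rfl
    simp [hw, rnorm] at hw0
  have hcut : w * rnorm ξ ^ 2 = cutXR χ R ξ := by
    have := (rnorm_pos hξ).ne'
    rw [hw]
    field_simp
  calc w * ‖b2sym F u x ξ‖ < w * (rnorm ξ ^ 2 + (a2sym F u x ξ).re) :=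
        mul_lt_mul_of_pos_left (hb hξ) hw0
    _ = cutXR χ R ξ + w * (a2sym F u x ξ).re := by rw [mul_add, hcut]
    _ ≤ 1 + w * (a2sym F u x ξ).re := by gcongr; exact hχ.2

end SecondOrderSymbols

section Diagonalization

open scoped ComplexConjugate

theorem signature_mul_mul_eigenvectors {K : Type*} [CommRing K] {a b c l : K}
    (hl : l ^ 2 = a ^ 2 - b * c) :
    !![1, 0; 0, -1] * !![a, b; c, a] * !![a + l, -b; -c, a + l]
      = !![a + l, -b; -c, a + l] * !![l, 0; 0, -l] := by
  ext i j
  fin_cases i <;> fin_cases j <;> simp <;> grind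

variable {F : (Fin (d + 1) → ℂ) → ℂ} {u : Fn d} {χ : ℝ → ℝ} {R : ℝ} {x ξ : Vec d}

theorem lam2_radicand_pos (hb : ‖b2til F u χ R x ξ‖ < 1 + (a2til F u χ R x ξ).re) :
    0 < (1 + (a2til F u χ R x ξ).re) ^ 2 - ‖b2til F u χ R x ξ‖ ^ 2 :=
  sub_pos.mpr (pow_lt_pow_left₀ hb (norm_nonneg _) two_ne_zero)

theorem lam2_pos (hb : ‖b2til F u χ R x ξ‖ < 1 + (a2til F u χ R x ξ).re) :
    0 < lam2 F u χ R x ξ :=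
  Real.sqrt_pos.mpr (lam2_radicand_pos hb)

theorem lam2_sq (hb : ‖b2til F u χ R x ξ‖ < 1 + (a2til F u χ R x ξ).re) :
    lam2 F u χ R x ξ ^ 2 = (1 + (a2til F u χ R x ξ).re) ^ 2 - ‖b2til F u χ R x ξ‖ ^ 2 :=
  Real.sq_sqrt (lam2_radicand_pos hb).le

theorem sden_radicand_pos (hb : ‖b2til F u χ R x ξ‖ < 1 + (a2til F u χ R x ξ).re) :
    0 < 2 * lam2 F u χ R x ξ * (1 + (a2til F u χ R x ξ).re + lam2 F u χ R x ξ) := by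
  have := lam2_pos hb
  have := (norm_nonneg _).trans_lt hb
  positivity

theorem sden_pos (hb : ‖b2til F u χ R x ξ‖ < 1 + (a2til F u χ R x ξ).re) :
    0 < sden F u χ R x ξ :=
  Real.sqrt_pos.mpr (sden_radicand_pos hb)

theorem sden_sq (hb : ‖b2til F u χ R x ξ‖ < 1 + (a2til F u χ R x ξ).re) :
    sden F u χ R x ξ ^ 2
      = 2 * lam2 F u χ R x ξ * (1 + (a2til F u χ R x ξ).re + lam2 F u χ R x ξ) :=
  Real.sq_sqrt (sden_radicand_pos hb).le

theorem s1sym_sq_sub_norm_s2sym_sq (hb : ‖b2til F u χ R x ξ‖ < 1 + (a2til F u χ R x ξ).re) :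
    s1sym F u χ R x ξ ^ 2 - ((‖s2sym F u χ R x ξ‖ ^ 2 : ℝ) : ℂ) = 1 := by
  have hs₂ : ‖s2sym F u χ R x ξ‖ = ‖b2til F u χ R x ξ‖ / sden F u χ R x ξ := by
    rw [s2sym, norm_div, norm_neg, norm_real, Real.norm_of_nonneg (sden_pos hb).le]
  rw [s1sym, hs₂]
  norm_cast
  rw [div_pow, div_pow, ← sub_div, div_eq_one_iff_eq (pow_pos (sden_pos hb) 2).ne', sden_sq hb]
  linear_combination -lam2_sq hb

theorem SmatInv_eq_adjugate : SmatInv F u χ R x ξ = (Smat F u χ R x ξ).adjugate := by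
  rw [Smat, Matrix.adjugate_fin_two_of, SmatInv]

theorem det_Smat : (Smat F u χ R x ξ).det =
    s1sym F u χ R x ξ ^ 2 - ((‖s2sym F u χ R x ξ‖ ^ 2 : ℝ) : ℂ) := by
  rw [Smat, Matrix.det_fin_two_of, mul_conj, normSq_eq_norm_sq, ← sq]

theorem SmatInv_mul_Smat (hb : ‖b2til F u χ R x ξ‖ < 1 + (a2til F u χ R x ξ).re) :
    SmatInv F u χ R x ξ * Smat F u χ R x ξ = 1 := by
  rw [SmatInv_eq_adjugate, Matrix.adjugate_mul, det_Smat, s1sym_sq_sub_norm_s2sym_sq hb, one_smul]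

theorem Smat_eq_smul : Smat F u χ R x ξ = ((sden F u χ R x ξ : ℝ) : ℂ)⁻¹ •
    !![((1 + (a2til F u χ R x ξ).re : ℝ) : ℂ) + lam2 F u χ R x ξ, -b2til F u χ R x ξ;
       -conj (b2til F u χ R x ξ), ((1 + (a2til F u χ R x ξ).re : ℝ) : ℂ) + lam2 F u χ R x ξ] := by
  simp [Smat, s1sym, s2sym, div_eq_inv_mul, Matrix.smul_of]

theorem one_add_A2tilMat (ha : (a2til F u χ R x ξ).im = 0) : 1 + A2tilMat F u χ R x ξ =
    !![((1 + (a2til F u χ R x ξ).re : ℝ) : ℂ), b2til F u χ R x ξ;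
       conj (b2til F u χ R x ξ), ((1 + (a2til F u χ R x ξ).re : ℝ) : ℂ)] := by
  have hre : ((a2til F u χ R x ξ).re : ℂ) = a2til F u χ R x ξ := conj_eq_iff_re.mp
    (conj_eq_iff_im.mpr ha)
  simp [A2tilMat, b2til_neg, Matrix.one_fin_two, hre]

theorem EmatM_mul_one_add_A2tilMat_mul_Smat (ha : (a2til F u χ R x ξ).im = 0)
    (hb : ‖b2til F u χ R x ξ‖ < 1 + (a2til F u χ R x ξ).re) :
    EmatM * (1 + A2tilMat F u χ R x ξ) * Smat F u χ R x ξ = Smat F u χ R x ξ *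
      !![((lam2 F u χ R x ξ : ℝ) : ℂ), 0; 0, -((lam2 F u χ R x ξ : ℝ) : ℂ)] := by
  have hlam : ((lam2 F u χ R x ξ : ℝ) : ℂ) ^ 2 = ((1 + (a2til F u χ R x ξ).re : ℝ) : ℂ) ^ 2
      - b2til F u χ R x ξ * conj (b2til F u χ R x ξ) := by
    rw [mul_conj, normSq_eq_norm_sq]
    exact_mod_cast lam2_sq hb
  rw [Smat_eq_smul, one_add_A2tilMat ha, EmatM, Matrix.mul_smul, Matrix.smul_mul,
    signature_mul_mul_eigenvectors hlam]

end Diagonalization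

theorem statement_13_general {F : (Fin (d + 1) → ℂ) → ℂ} {u : Fn d} {χ : ℝ → ℝ} {R : ℝ}
    {x ξ : Vec d} (hF : ContDiffAt ℝ 2 F (jet u x)) (hreal : ∀ y, (F y).im = 0)
    (hχ : cutXR χ R ξ ∈ Set.Icc (0 : ℝ) 1)
    (hell : ξ ≠ 0 → ‖b2sym F u x ξ‖ < rnorm ξ ^ 2 + (a2sym F u x ξ).re) :
    0 < (1 + (a2til F u χ R x ξ).re) ^ 2 - ‖b2til F u χ R x ξ‖ ^ 2 ∧
    SmatInv F u χ R x ξ * (EmatM * (1 + A2tilMat F u χ R x ξ)) * Smat F u χ R x ξ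
      = !![((lam2 F u χ R x ξ : ℝ) : ℂ), 0; 0, -((lam2 F u χ R x ξ : ℝ) : ℂ)] ∧
    (s1sym F u χ R x ξ) ^ 2 - ((‖s2sym F u χ R x ξ‖ ^ 2 : ℝ) : ℂ) = 1 := by
  have hb := norm_b2til_lt hχ hell
  refine ⟨lam2_radicand_pos hb, ?_, s1sym_sq_sub_norm_s2sym_sq hb⟩
  rw [Matrix.mul_assoc, EmatM_mul_one_add_A2tilMat_mul_Smat (a2til_im hF hreal) hb,
    ← Matrix.mul_assoc, SmatInv_mul_Smat hb, Matrix.one_mul]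

/-- eq. (4.7): under global ellipticity the quantity
`(1+ã_{2,R})² - |b̃_{2,R}|²` is positive (so `λ₂` is well defined), and for every `(x,ξ)`
one has the exact diagonalization
`S^{-1}(x,ξ) E(𝟙 + Ã_{2,R}(x,ξ)) S(x,ξ) = diag(λ₂, -λ₂)` and `s₁² - |s₂|² = 1`. -/
theorem statement_13 (d : ℕ) (hd : 1 ≤ d) (F : (Fin (d + 1) → ℂ) → ℂ)
    (hF : GoodF d F) (hE : Elliptic d F)
    (χ : ℝ → ℝ) (hχ : IsCutoff χ) (R : ℝ) (hR : 0 < R) :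
    ∀ (u : Fn d) (x ξ : Vec d),
      0 < (1 + (a2til F u χ R x ξ).re) ^ 2 - ‖b2til F u χ R x ξ‖ ^ 2 ∧
      SmatInv F u χ R x ξ * (EmatM * (1 + A2tilMat F u χ R x ξ)) * Smat F u χ R x ξ
        = !![((lam2 F u χ R x ξ : ℝ) : ℂ), 0; 0, -((lam2 F u χ R x ξ : ℝ) : ℂ)] ∧
      (s1sym F u χ R x ξ) ^ 2 - ((‖s2sym F u χ R x ξ‖ ^ 2 : ℝ) : ℂ) = 1 :=
  fun u x ξ => statement_13_general (contDiff_infty.mp hF.1 2).contDiffAt hF.2.1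
    (hχ.cutXR_mem_Icc R ξ) (hE.norm_b2sym_lt u x)

end QLNLS
end
end
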